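/- arXiv:1901.10845 — 3 statements merged into one kernel-verified Lean document; each statement's English description precedes it below -/
import Mathlib

section
/- Let N ≥ 2, 0 < s < 1 and 1 ≤ q < 2*_s := 2N/(N−2s). Let Ω ⊆ ℝ^N be an open bounded set with A(Ω) > 0, let u be a first minimizer for λ_{s,q}(Ω), set λ = λ_{s,q}(Ω), U(x,z) = (P_z ∗ u)(x), and let T = sup { t > 0 : |{u > t}| ≥ |Ω|(1 − A(Ω)/9) }. Then for every t with T/4 ≤ t ≤ (3/8)T and every z with 0 < z ≤ ((√(A(Ω)·|Ω|)/(24·√(β_{N,s} λ)))·T)^{1/s}, writing E_{t,z} = {x ∈ ℝ^N : U(x,z) > t}, one has | |E_{t,z}| − |Ω| | ≤ (1/3)|Ω| A(Ω) and A(E_{t,z}) ≥ (1/5) A(Ω). -/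
open MeasureTheory Filter
open scoped ENNReal NNReal Topology FourierTransform RealInnerProductSpace

noncomputable section

/-- Euclidean space ℝ^N -/
abbrev Eu (N : ℕ) := EuclideanSpace ℝ (Fin N)

/-- Squared Gagliardo seminorm `[u]_{W^{s,2}}²`, as an extended nonnegative real. -/
def gagliardoSq (N : ℕ) (s : ℝ) (u : Eu N → ℝ) : ℝ≥0∞ :=
  ∫⁻ x, ∫⁻ y, ENNReal.ofReal (|u x - u y| ^ 2 / ‖x - y‖ ^ ((N : ℝ) + 2 * s))

/-- Squared Gagliardo seminorm, as a real number. -/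
def gagliardoSqR (N : ℕ) (s : ℝ) (u : Eu N → ℝ) : ℝ :=
  (gagliardoSq N s u).toReal

/-- The sharp fractional Poincaré–Sobolev constant
`λ_{s,q}(Ω) = inf { [u]_{W^{s,2}}² : u ∈ C_c^∞(Ω), ‖u‖_{L^q(Ω)} = 1 }`. -/
def sobolevConst (N : ℕ) (s q : ℝ) (Ω : Set (Eu N)) : ℝ :=
  sInf { c : ℝ | ∃ u : Eu N → ℝ, ContDiff ℝ (⊤ : ℕ∞) u ∧ HasCompactSupport u ∧
    tsupport u ⊆ Ω ∧ (∫ x in Ω, |u x| ^ q) = 1 ∧ c = gagliardoSqR N s u }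

/-- The Fraenkel asymmetry `A(Ω)`. -/
def asym (N : ℕ) (Ω : Set (Eu N)) : ℝ :=
  sInf { c : ℝ | ∃ (x₀ : Eu N) (r : ℝ), 0 < r ∧
    volume (Metric.ball x₀ r) = volume Ω ∧
    c = (volume (symmDiff Ω (Metric.ball x₀ r))).toReal / (volume Ω).toReal }

/-- The normalizing constant `β_{N,s}`. -/
def betaC (N : ℕ) (s : ℝ) : ℝ :=
  (∫ x : Eu N, ((1 : ℝ) + ‖x‖ ^ 2) ^ (-((N : ℝ) + 2 * s) / 2))⁻¹

/-- The Poisson kernel `P_z(x) = β_{N,s} z^{2s} (z² + |x|²)^{-(N+2s)/2}`. -/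
def poisson (N : ℕ) (s z : ℝ) (x : Eu N) : ℝ :=
  betaC N s * z ^ (2 * s) * ((z ^ 2 + ‖x‖ ^ 2) ^ (-((N : ℝ) + 2 * s) / 2))

/-- The Caffarelli–Silvestre extension `U(x,z) = (P_z ∗ u)(x)`. -/
def csExt (N : ℕ) (s : ℝ) (u : Eu N → ℝ) (x : Eu N) (z : ℝ) : ℝ :=
  ∫ y, poisson N s z (x - y) * u y

/-- A first minimizer for `λ_{s,q}(Ω)`: a nonnegative measurable function, vanishing a.e.
outside `Ω`, with unit `L^q` norm, realizing the infimum, and positive inside `Ω`. -/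
def IsFirstMinimizer (N : ℕ) (s q : ℝ) (Ω : Set (Eu N)) (u : Eu N → ℝ) : Prop :=
  Measurable u ∧ (∀ x, 0 ≤ u x) ∧ (∀ᵐ x, x ∉ Ω → u x = 0) ∧
  (∫ x in Ω, u x ^ q) = 1 ∧ gagliardoSqR N s u = sobolevConst N s q Ω ∧
  ∀ x ∈ Ω, 0 < u x

/-- The level `T` from (4.1): `T = sup { t > 0 : |{u > t}| ≥ |Ω| (1 - A(Ω)/9) }`. -/
def levelT (N : ℕ) (Ω : Set (Eu N)) (u : Eu N → ℝ) : ℝ :=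
  sSup { t : ℝ | 0 < t ∧
    volume Ω * ENNReal.ofReal (1 - asym N Ω / 9) ≤ volume {x | t < u x} }

/-!
Write `E = {U(·, z) > t}` and `F = {u > 7T/8}`. Since `P_z` is a probability density with
`P_z(x) ≤ β z^{2s} |x|^{-(N+2s)}`, Jensen's inequality gives `‖U(·, z) - u‖₂² ≤ β z^{2s} [u]²`,
so by Chebyshev `U(·, z)` and `u` differ by at least `T/4` only on a set of measure at most
`A(Ω)|Ω|/36`. On `F \ E` they differ by at least `7T/8 - t ≥ T/2`, on `E \ Ω` by at least `t ≥ T/4`,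
and `|Ω \ F| ≤ A(Ω)|Ω|/9` by the choice of `T`; hence `|Ω ∆ E|` is a small fraction of `A(Ω)|Ω|`.
Finally, the asymmetry is stable under small symmetric differences: replacing `Ω` by `E` costs at
most `2|Ω ∆ E|` in `A(Ω)|Ω|`.
-/

section Measure

variable {α : Type*} [MeasurableSpace α] {μ : Measure α}

theorem measureReal_symmDiff_le_sdiff_add_sdiff_add_sdiff {S F R : Set α} (hS : μ S ≠ ∞)
    (hF : μ F ≠ ∞) :
    μ.real (symmDiff S R) ≤ μ.real (S \ F) + μ.real (F \ R) + μ.real (R \ S) :=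
  calc μ.real (symmDiff S R) ≤ μ.real (S \ R) + μ.real (R \ S) := measureReal_union_le _ _
    _ ≤ μ.real ((S \ F) ∪ (F \ R)) + μ.real (R \ S) := by
      gcongr
      · exact measure_union_ne_top (measure_ne_top_of_subset Set.sdiff_subset hS)
          (measure_ne_top_of_subset Set.sdiff_subset hF)
      · exact sdiff_triangle S F R
    _ ≤ μ.real (S \ F) + μ.real (F \ R) + μ.real (R \ S) := by
      gcongr
      exact measureReal_union_le _ _

theorem sq_lintegral_mul_le_lintegral_mul_lintegral_mul_sq {w f : α → ℝ≥0∞}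
    (hw : AEMeasurable w μ) (hf : AEMeasurable f μ) :
    (∫⁻ x, w x * f x ∂μ) ^ 2 ≤ (∫⁻ x, w x ∂μ) * ∫⁻ x, w x * f x ^ 2 ∂μ := by
  have sq_rpow_half (a : ℝ≥0∞) : (a ^ (1 / 2 : ℝ)) ^ (2 : ℝ) = a := by
    rw [← ENNReal.rpow_mul]
    norm_num
  have rpow_half_mul_self (a : ℝ≥0∞) : a ^ (1 / 2 : ℝ) * a ^ (1 / 2 : ℝ) = a := by
    rw [← sq, ← ENNReal.rpow_two, sq_rpow_half]
  have holder := ENNReal.lintegral_mul_le_Lp_mul_Lq μ Real.HolderConjugate.two_two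
    (hw.pow_const (1 / 2 : ℝ)) ((hw.pow_const (1 / 2 : ℝ)).mul hf)
  simp only [Pi.mul_apply, ← mul_assoc, rpow_half_mul_self,
    ENNReal.mul_rpow_of_nonneg _ _ (zero_le_two (α := ℝ)), sq_rpow_half] at holder
  simpa only [ENNReal.mul_rpow_of_nonneg _ _ (zero_le_two (α := ℝ)), sq_rpow_half,
    ENNReal.rpow_two] using ENNReal.rpow_le_rpow holder (zero_le_two (α := ℝ))

theorem integrable_of_integrable_rpow [IsFiniteMeasure μ] {q : ℝ} (hq : 1 ≤ q) {u : α → ℝ}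
    (hum : AEStronglyMeasurable u μ) (hu0 : ∀ x, 0 ≤ u x)
    (hint : Integrable (fun x ↦ u x ^ q) μ) : Integrable u μ := by
  have hq0 : 0 < q := one_pos.trans_le hq
  have hmem : MemLp u (ENNReal.ofReal q) μ := by
    rw [← integrable_norm_rpow_iff hum (by simpa using hq0) ENNReal.ofReal_ne_top,
      ENNReal.toReal_ofReal hq0.le]
    simpa only [Real.norm_of_nonneg (hu0 _)] using hint
  exact hmem.integrable (by simpa using hq)

end Measure

section Ball

theorem measureReal_symmDiff_ball_ball {X : Type*} [PseudoMetricSpace X] [ProperSpace X]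
    [MeasurableSpace X] [OpensMeasurableSpace X] (μ : Measure X) [IsFiniteMeasureOnCompacts μ]
    (x₀ : X) (r r' : ℝ) :
    μ.real (symmDiff (Metric.ball x₀ r) (Metric.ball x₀ r')) =
      |μ.real (Metric.ball x₀ r) - μ.real (Metric.ball x₀ r')| := by
  wlog h : r ≤ r' generalizing r r'
  · rw [symmDiff_comm, abs_sub_comm]
    exact this r' r (le_of_not_ge h)
  have hsub := Metric.ball_subset_ball (x := x₀) h
  rw [symmDiff_of_le hsub, measureReal_sdiff hsub measurableSet_ball measure_ball_lt_top.ne,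
    abs_sub_comm, abs_of_nonneg (sub_nonneg.2 (measureReal_mono hsub measure_ball_lt_top.ne))]

theorem exists_addHaar_ball_eq {E : Type*} [NormedAddCommGroup E] [NormedSpace ℝ E]
    [FiniteDimensional ℝ E] [Nontrivial E] [MeasurableSpace E] [BorelSpace E] (μ : Measure E)
    [μ.IsAddHaarMeasure] (x₀ : E) {V : ℝ≥0∞} (hV0 : V ≠ 0) (hV : V ≠ ∞) :
    ∃ r : ℝ, 0 < r ∧ μ (Metric.ball x₀ r) = V := by
  have hc0 : μ (Metric.ball 0 1) ≠ 0 := (Metric.measure_ball_pos μ 0 one_pos).ne'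
  have hc : μ (Metric.ball 0 1) ≠ ∞ := measure_ball_lt_top.ne
  set ratio := V / μ (Metric.ball 0 1)
  have hratio : ratio ≠ ∞ := ENNReal.div_ne_top hV hc0
  have hpos : 0 < ratio.toReal :=
    ENNReal.toReal_pos (ENNReal.div_ne_zero.2 ⟨hV0, hc⟩) hratio
  have hr := Real.rpow_pos_of_pos hpos (Module.finrank ℝ E : ℝ)⁻¹
  refine ⟨_, hr, ?_⟩
  rw [Measure.addHaar_ball_of_pos μ x₀ hr,
    Real.rpow_inv_natCast_pow hpos.le Module.finrank_pos.ne', ENNReal.ofReal_toReal hratio,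
    ENNReal.div_mul_cancel hc0 hc]

end Ball

section Asymmetry

variable {N : ℕ} {Ω E : Set (Eu N)}

theorem asym_mul_volume_le_symmDiff_ball {x₀ : Eu N} {r : ℝ} (hr : 0 < r)
    (hB : volume (Metric.ball x₀ r) = volume Ω) :
    asym N Ω * volume.real Ω ≤ volume.real (symmDiff Ω (Metric.ball x₀ r)) := by
  have hΩ : 0 < volume.real Ω := by
    rw [measureReal_def, ← hB]
    exact ENNReal.toReal_pos (Metric.measure_ball_pos volume x₀ hr).ne' measure_ball_lt_top.ne
  rw [← le_div_iff₀ hΩ]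
  exact csInf_le ⟨0, by rintro c ⟨_, _, _, _, rfl⟩; positivity⟩ ⟨x₀, r, hr, hB, rfl⟩

theorem le_asym_mul_volume [NeZero N] (hE0 : volume E ≠ 0) (hE : volume E ≠ ∞) {c : ℝ}
    (h : ∀ (x₀ : Eu N) (r : ℝ), volume (Metric.ball x₀ r) = volume E →
      c ≤ volume.real (symmDiff E (Metric.ball x₀ r))) :
    c ≤ asym N E * volume.real E := by
  have hEpos : 0 < volume.real E := ENNReal.toReal_pos hE0 hE
  obtain ⟨r₀, hr₀, hB₀⟩ := exists_addHaar_ball_eq volume (0 : Eu N) hE0 hE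
  rw [← div_le_iff₀ hEpos]
  refine le_csInf ⟨_, 0, r₀, hr₀, hB₀, rfl⟩ ?_
  rintro _ ⟨x₀, r, -, hB, rfl⟩
  exact div_le_div_of_nonneg_right (h x₀ r hB) hEpos.le

theorem exists_volume_ball_eq_of_asym_pos (hA : 0 < asym N Ω) :
    ∃ (x₀ : Eu N) (r : ℝ), 0 < r ∧ volume (Metric.ball x₀ r) = volume Ω := by
  obtain ⟨_, x₀, r, hr, hB, -⟩ := Set.nonempty_iff_ne_empty.2 fun h ↦
    hA.ne' ((congrArg sInf h).trans Real.sInf_empty)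
  exact ⟨x₀, r, hr, hB⟩

theorem volume_ne_zero_of_asym_pos (hA : 0 < asym N Ω) : volume Ω ≠ 0 := by
  obtain ⟨x₀, r, hr, hB⟩ := exists_volume_ball_eq_of_asym_pos hA
  exact hB ▸ (Metric.measure_ball_pos volume x₀ hr).ne'

theorem volume_ne_top_of_asym_pos (hA : 0 < asym N Ω) : volume Ω ≠ ∞ := by
  obtain ⟨x₀, r, -, hB⟩ := exists_volume_ball_eq_of_asym_pos hA
  exact hB ▸ measure_ball_lt_top.ne

theorem asym_le_two (N : ℕ) (Ω : Set (Eu N)) : asym N Ω ≤ 2 := by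
  by_contra! hA
  have hA0 : 0 < asym N Ω := two_pos.trans hA
  obtain ⟨x₀, r, hr, hB⟩ := exists_volume_ball_eq_of_asym_pos hA0
  have hΩpos : 0 < volume.real Ω :=
    ENNReal.toReal_pos (volume_ne_zero_of_asym_pos hA0) (volume_ne_top_of_asym_pos hA0)
  have hsymm : volume.real (symmDiff Ω (Metric.ball x₀ r)) ≤ 2 * volume.real Ω :=
    calc volume.real (symmDiff Ω (Metric.ball x₀ r))
        ≤ volume.real (Ω ∪ Metric.ball x₀ r) :=
          measureReal_mono Set.symmDiff_subset_union
            (measure_union_ne_top (volume_ne_top_of_asym_pos hA0) measure_ball_lt_top.ne)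
      _ ≤ volume.real Ω + volume.real (Metric.ball x₀ r) := measureReal_union_le _ _
      _ = 2 * volume.real Ω := by rw [measureReal_def, measureReal_def, hB, two_mul]
  nlinarith [asym_mul_volume_le_symmDiff_ball hr hB]

/- A ball `B` competing for `E` is compared with the concentric ball `B'` of volume `|Ω|`, for
which `|B ∆ B'| = ||E| - |Ω|| ≤ |Ω ∆ E|`. -/
theorem asym_mul_volume_le_add_two_mul_symmDiff [NeZero N] (hΩm : NullMeasurableSet Ω)
    (hEm : NullMeasurableSet E) (hΩ0 : volume Ω ≠ 0) (hΩ : volume Ω ≠ ∞) (hE0 : volume E ≠ 0)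
    (hE : volume E ≠ ∞) :
    asym N Ω * volume.real Ω ≤ asym N E * volume.real E + 2 * volume.real (symmDiff Ω E) := by
  rw [← sub_le_iff_le_add]
  refine le_asym_mul_volume hE0 hE fun x₀ r hB ↦ ?_
  obtain ⟨r', hr', hB'⟩ := exists_addHaar_ball_eq volume x₀ hΩ0 hΩ
  set B := Metric.ball x₀ r
  set B' := Metric.ball x₀ r'
  have hBB' : volume.real (symmDiff B B') ≤ volume.real (symmDiff Ω E) := by
    rw [measureReal_symmDiff_ball_ball, measureReal_def, measureReal_def, hB, hB', abs_sub_comm]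
    exact abs_measureReal_sub_le_measureReal_symmDiff' hΩm hEm hΩ hE
  have hΩB' : volume.real (symmDiff Ω B') ≤ volume.real (symmDiff Ω E) +
      (volume.real (symmDiff E B) + volume.real (symmDiff B B')) :=
    (measureReal_symmDiff_le B' hΩ hE).trans <|
      add_le_add_right (measureReal_symmDiff_le B' hE measure_ball_lt_top.ne) _
  linarith [asym_mul_volume_le_symmDiff_ball hr' hB']

theorem asym_ge_of_symmDiff_le [NeZero N] (hΩm : NullMeasurableSet Ω) (hEm : NullMeasurableSet E)
    (hE : volume E ≠ ∞) (hA : 0 < asym N Ω) {c : ℝ} (hc : c < 1 / 2)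
    (h : volume.real (symmDiff Ω E) ≤ c * (volume.real Ω * asym N Ω)) :
    (1 - 2 * c) / (1 + 2 * c) * asym N Ω ≤ asym N E := by
  have hΩ0 := volume_ne_zero_of_asym_pos hA
  have hΩ := volume_ne_top_of_asym_pos hA
  have hV : 0 < volume.real Ω := ENNReal.toReal_pos hΩ0 hΩ
  have hc0 : 0 ≤ c := nonneg_of_mul_nonneg_left (measureReal_nonneg.trans h) (mul_pos hV hA)
  have hdiff := (abs_measureReal_sub_le_measureReal_symmDiff' hΩm hEm hΩ hE).trans h
  have hbound : c * (volume.real Ω * asym N Ω) ≤ 2 * c * volume.real Ω :=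
    calc c * (volume.real Ω * asym N Ω) ≤ c * (volume.real Ω * 2) := by
          gcongr
          exact asym_le_two N Ω
      _ = 2 * c * volume.real Ω := by ring
  obtain ⟨hlower, hupper⟩ := abs_le.1 (hdiff.trans hbound)
  have hEpos : 0 < volume.real E := by nlinarith
  have hstab := asym_mul_volume_le_add_two_mul_symmDiff hΩm hEm hΩ0 hΩ
    (ENNReal.toReal_ne_zero.1 hEpos.ne').1 hE
  have hkey : (1 - 2 * c) / (1 + 2 * c) * asym N Ω * volume.real E ≤
      asym N E * volume.real E :=
    calc (1 - 2 * c) / (1 + 2 * c) * asym N Ω * volume.real E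
        ≤ (1 - 2 * c) / (1 + 2 * c) * asym N Ω * ((1 + 2 * c) * volume.real Ω) := by
          have : 0 ≤ 1 - 2 * c := by linarith
          gcongr
          linarith
      _ = (1 - 2 * c) * (asym N Ω * volume.real Ω) := by field_simp
      _ ≤ asym N E * volume.real E := by linarith
  exact le_of_mul_le_mul_right hkey hEpos

end Asymmetry

section PoissonKernel

variable {N : ℕ} {s z : ℝ}

theorem integrable_one_add_norm_sq_rpow (N : ℕ) (hs : 0 < s) :
    Integrable fun x : Eu N ↦ ((1 : ℝ) + ‖x‖ ^ 2) ^ (-((N : ℝ) + 2 * s) / 2) :=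
  integrable_rpow_neg_one_add_norm_sq (by simpa using hs)

theorem betaC_nonneg (N : ℕ) (s : ℝ) : 0 ≤ betaC N s :=
  inv_nonneg.2 (integral_nonneg fun _ ↦ by positivity)

theorem integral_one_add_norm_sq_rpow_pos (N : ℕ) (hs : 0 < s) :
    0 < ∫ x : Eu N, ((1 : ℝ) + ‖x‖ ^ 2) ^ (-((N : ℝ) + 2 * s) / 2) :=
  integral_pos_of_integrable_nonneg_nonzero (x := 0)
    (Continuous.rpow_const (by fun_prop) fun x ↦ .inl (by positivity))
    (integrable_one_add_norm_sq_rpow N hs) (fun _ ↦ by positivity) (by simp)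

theorem measurable_poisson (N : ℕ) (s z : ℝ) : Measurable (poisson N s z) := by
  unfold poisson
  fun_prop

theorem poisson_nonneg (N : ℕ) (s : ℝ) (hz : 0 ≤ z) (x : Eu N) : 0 ≤ poisson N s z x := by
  have := betaC_nonneg N s
  unfold poisson
  positivity

theorem poisson_eq_rescaled (s : ℝ) (hz : 0 < z) (x : Eu N) :
    poisson N s z x = betaC N s * (z ^ N)⁻¹ *
      ((1 : ℝ) + ‖z⁻¹ • x‖ ^ 2) ^ (-((N : ℝ) + 2 * s) / 2) := by
  have hbase : z ^ 2 + ‖x‖ ^ 2 = z ^ 2 * (1 + ‖z⁻¹ • x‖ ^ 2) := by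
    rw [norm_smul, norm_inv, Real.norm_of_nonneg hz.le]
    field_simp
  have hpow : z ^ (2 * s) * (z ^ 2) ^ (-((N : ℝ) + 2 * s) / 2) = (z ^ N)⁻¹ := by
    rw [← Real.rpow_natCast z 2, ← Real.rpow_mul hz.le, ← Real.rpow_add hz,
      ← Real.rpow_natCast z N, ← Real.rpow_neg hz.le]
    congr 1
    push_cast
    ring
  rw [poisson, hbase, Real.mul_rpow (by positivity) (by positivity), ← hpow]
  ring

theorem integrable_poisson (N : ℕ) (hs : 0 < s) (hz : 0 < z) : Integrable (poisson N s z) := by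
  rw [funext (poisson_eq_rescaled s hz)]
  exact ((integrable_one_add_norm_sq_rpow N hs).comp_smul (inv_ne_zero hz.ne')).const_mul _

theorem integral_poisson (N : ℕ) (hs : 0 < s) (hz : 0 < z) : ∫ x, poisson N s z x = 1 := by
  have hI := (integral_one_add_norm_sq_rpow_pos N hs).ne'
  rw [funext (poisson_eq_rescaled s hz), integral_const_mul,
    Measure.integral_comp_inv_smul_of_nonneg volume
      (fun x : Eu N ↦ ((1 : ℝ) + ‖x‖ ^ 2) ^ (-((N : ℝ) + 2 * s) / 2)) hz.le,
    finrank_euclideanSpace_fin, smul_eq_mul, betaC, mul_assoc,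
    inv_mul_cancel_left₀ (pow_pos hz N).ne', inv_mul_cancel₀ hI]

theorem poisson_le_mul_rpow_neg (hs : 0 ≤ s) (hz : 0 ≤ z) {r : ℝ} (hr : 0 < r) {x : Eu N}
    (hrx : r ^ 2 ≤ z ^ 2 + ‖x‖ ^ 2) :
    poisson N s z x ≤ betaC N s * z ^ (2 * s) * r ^ (-((N : ℝ) + 2 * s)) := by
  have hβ := betaC_nonneg N s
  have hpow : r ^ (-((N : ℝ) + 2 * s)) = (r ^ 2) ^ (-((N : ℝ) + 2 * s) / 2) := by
    rw [← Real.rpow_natCast r 2, ← Real.rpow_mul hr.le]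
    congr 1
    push_cast
    ring
  rw [poisson, hpow]
  exact mul_le_mul_of_nonneg_left (Real.rpow_le_rpow_of_nonpos (by positivity) hrx
    (by have := N.cast_nonneg (α := ℝ); linarith)) (by positivity)

theorem csExt_sub_eq_integral (hs : 0 < s) (hz : 0 < z) {u : Eu N → ℝ} (hu : Integrable u)
    (x : Eu N) : csExt N s u x z - u x = ∫ y, poisson N s z (x - y) * (u y - u x) := by
  have hP : Integrable fun y ↦ poisson N s z (x - y) :=
    (integrable_poisson N hs hz).comp_sub_left x
  have hPu : Integrable fun y ↦ poisson N s z (x - y) * u y :=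
    hu.bdd_mul hP.aestronglyMeasurable (ae_of_all _ fun y ↦ by
      rw [Real.norm_of_nonneg (poisson_nonneg N s hz.le _)]
      exact poisson_le_mul_rpow_neg hs.le hz.le hz (le_add_of_nonneg_right (sq_nonneg _)))
  simp_rw [mul_sub]
  rw [integral_sub hPu (hP.mul_const _), integral_mul_const,
    integral_sub_left_eq_self (poisson N s z) volume x, integral_poisson N hs hz, one_mul, csExt]

theorem measurable_csExt (s z : ℝ) {u : Eu N → ℝ} (hu : Measurable u) :
    Measurable fun x ↦ csExt N s u x z := by
  have hP := measurable_poisson N s z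
  have huncurry : Measurable fun p : Eu N × Eu N ↦ poisson N s z (p.1 - p.2) * u p.2 := by
    fun_prop
  exact huncurry.stronglyMeasurable.integral_prod_right'.measurable

end PoissonKernel

section TraceEstimate

variable {N : ℕ} {s z : ℝ} {u : Eu N → ℝ}

theorem poisson_mul_sq_sub_le (hs : 0 ≤ s) (hz : 0 ≤ z) (u : Eu N → ℝ) (x y : Eu N) :
    poisson N s z (x - y) * (u y - u x) ^ 2 ≤
      betaC N s * z ^ (2 * s) * (|u x - u y| ^ 2 / ‖x - y‖ ^ ((N : ℝ) + 2 * s)) := by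
  rcases eq_or_ne x y with rfl | hxy
  · simp
  calc poisson N s z (x - y) * (u y - u x) ^ 2
      ≤ betaC N s * z ^ (2 * s) * ‖x - y‖ ^ (-((N : ℝ) + 2 * s)) * (u y - u x) ^ 2 := by
        gcongr
        exact poisson_le_mul_rpow_neg hs hz (norm_sub_pos_iff.2 hxy)
          (le_add_of_nonneg_left (sq_nonneg z))
    _ = betaC N s * z ^ (2 * s) * (|u x - u y| ^ 2 / ‖x - y‖ ^ ((N : ℝ) + 2 * s)) := by
        rw [Real.rpow_neg (norm_nonneg _), sq_abs]
        ring

theorem enorm_csExt_sub_sq_le (hs : 0 < s) (hz : 0 < z) (hum : Measurable u)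
    (hui : Integrable u) (x : Eu N) :
    ‖csExt N s u x z - u x‖ₑ ^ 2 ≤ ENNReal.ofReal (betaC N s * z ^ (2 * s)) *
      ∫⁻ y, ENNReal.ofReal (|u x - u y| ^ 2 / ‖x - y‖ ^ ((N : ℝ) + 2 * s)) := by
  have hβ := betaC_nonneg N s
  set P : Eu N → ℝ≥0∞ := fun y ↦ ENNReal.ofReal (poisson N s z (x - y))
  have hPint : Integrable fun y ↦ poisson N s z (x - y) :=
    (integrable_poisson N hs hz).comp_sub_left x
  have hPmass : ∫⁻ y, P y = 1 := by
    rw [← ofReal_integral_eq_lintegral_ofReal hPint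
      (ae_of_all _ fun y ↦ poisson_nonneg N s hz.le _),
      integral_sub_left_eq_self (poisson N s z) volume x, integral_poisson N hs hz,
      ENNReal.ofReal_one]
  calc ‖csExt N s u x z - u x‖ₑ ^ 2
      ≤ (∫⁻ y, P y * ‖u y - u x‖ₑ) ^ 2 := by
        gcongr
        rw [csExt_sub_eq_integral hs hz hui x]
        refine (enorm_integral_le_lintegral_enorm _).trans_eq ?_
        simp only [enorm_mul, Real.enorm_of_nonneg (poisson_nonneg N s hz.le _), P]
    _ ≤ (∫⁻ y, P y) * ∫⁻ y, P y * ‖u y - u x‖ₑ ^ 2 :=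
        sq_lintegral_mul_le_lintegral_mul_lintegral_mul_sq hPint.aemeasurable.ennreal_ofReal
          (hum.sub_const _).enorm.aemeasurable
    _ = ∫⁻ y, ENNReal.ofReal (poisson N s z (x - y) * (u y - u x) ^ 2) := by
        rw [hPmass, one_mul]
        refine lintegral_congr fun y ↦ ?_
        rw [ENNReal.ofReal_mul (poisson_nonneg N s hz.le _), ← sq_abs, ENNReal.ofReal_pow
          (abs_nonneg _), Real.enorm_eq_ofReal_abs]
    _ ≤ ∫⁻ y, ENNReal.ofReal (betaC N s * z ^ (2 * s) *
          (|u x - u y| ^ 2 / ‖x - y‖ ^ ((N : ℝ) + 2 * s))) :=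
        lintegral_mono fun y ↦ ENNReal.ofReal_le_ofReal (poisson_mul_sq_sub_le hs.le hz.le u x y)
    _ = _ := by
        simp_rw [ENNReal.ofReal_mul (p := betaC N s * z ^ (2 * s)) (by positivity)]
        exact lintegral_const_mul' _ _ ENNReal.ofReal_ne_top

theorem lintegral_enorm_csExt_sub_sq_le (hs : 0 < s) (hz : 0 < z) (hum : Measurable u)
    (hui : Integrable u) :
    ∫⁻ x, ‖csExt N s u x z - u x‖ₑ ^ 2 ≤
      ENNReal.ofReal (betaC N s * z ^ (2 * s)) * gagliardoSq N s u :=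
  (lintegral_mono fun x ↦ enorm_csExt_sub_sq_le hs hz hum hui x).trans_eq
    (lintegral_const_mul' _ _ ENNReal.ofReal_ne_top)

theorem ofReal_sq_mul_volume_le_abs_csExt_sub_le (hs : 0 < s) (hz : 0 < z) (hum : Measurable u)
    (hui : Integrable u) {δ : ℝ} (hδ : 0 ≤ δ) :
    ENNReal.ofReal (δ ^ 2) * volume {x | δ ≤ |csExt N s u x z - u x|} ≤
      ENNReal.ofReal (betaC N s * z ^ (2 * s)) * gagliardoSq N s u := by
  refine le_trans ?_ (lintegral_enorm_csExt_sub_sq_le hs hz hum hui)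
  have hm : Measurable fun x ↦ ‖csExt N s u x z - u x‖ₑ ^ 2 :=
    (((measurable_csExt s z hum).sub hum).enorm).pow_const 2
  refine le_trans (mul_le_mul_right (measure_mono fun x hx ↦ ?_) _)
    (mul_meas_ge_le_lintegral hm (ENNReal.ofReal (δ ^ 2)))
  change ENNReal.ofReal (δ ^ 2) ≤ ‖csExt N s u x z - u x‖ₑ ^ 2
  rw [Real.enorm_eq_ofReal_abs, ENNReal.ofReal_pow hδ]
  gcongr
  exact hx

theorem volume_le_abs_csExt_sub_ne_top (hs : 0 < s) (hz : 0 < z) (hum : Measurable u)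
    (hui : Integrable u) (hgag : gagliardoSq N s u ≠ ∞) {δ : ℝ} (hδ : 0 < δ) :
    volume {x | δ ≤ |csExt N s u x z - u x|} ≠ ∞ := by
  intro htop
  have hcheb := ofReal_sq_mul_volume_le_abs_csExt_sub_le hs hz hum hui hδ.le
  rw [htop, ENNReal.mul_top (ENNReal.ofReal_pos.2 (by positivity)).ne', top_le_iff] at hcheb
  exact ENNReal.mul_ne_top ENNReal.ofReal_ne_top hgag hcheb

theorem volume_real_le_abs_csExt_sub_le (hs : 0 < s) (hz : 0 < z) (hum : Measurable u)
    (hui : Integrable u) (hgag : gagliardoSq N s u ≠ ∞) {δ : ℝ} (hδ : 0 < δ) :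
    volume.real {x | δ ≤ |csExt N s u x z - u x|} ≤
      betaC N s * z ^ (2 * s) * gagliardoSqR N s u / δ ^ 2 := by
  have hβ := betaC_nonneg N s
  have hcheb := ENNReal.toReal_mono (ENNReal.mul_ne_top ENNReal.ofReal_ne_top hgag)
    (ofReal_sq_mul_volume_le_abs_csExt_sub_le hs hz hum hui hδ.le)
  rwa [ENNReal.toReal_mul, ENNReal.toReal_mul, ENNReal.toReal_ofReal (by positivity),
    ENNReal.toReal_ofReal (by positivity), mul_comm, ← le_div_iff₀ (by positivity)] at hcheb

end TraceEstimate

section LevelSets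

variable {N : ℕ} {s z : ℝ} {Ω : Set (Eu N)} {u : Eu N → ℝ} {t τ : ℝ}

theorem volume_real_superlevel_sdiff_csExt_superlevel_le (hs : 0 < s) (hz : 0 < z)
    (hum : Measurable u) (hui : Integrable u) (hgag : gagliardoSq N s u ≠ ∞) (htτ : t < τ) :
    volume.real ({x | τ < u x} \ {x | t < csExt N s u x z}) ≤
      betaC N s * z ^ (2 * s) * gagliardoSqR N s u / (τ - t) ^ 2 := by
  have hδ := sub_pos.2 htτ
  refine le_trans (measureReal_mono ?_ (volume_le_abs_csExt_sub_ne_top hs hz hum hui hgag hδ))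
    (volume_real_le_abs_csExt_sub_le hs hz hum hui hgag hδ)
  rintro x ⟨hτ, ht⟩
  rw [Set.mem_ofPred_eq] at hτ ht ⊢
  rw [abs_sub_comm]
  exact (by linarith : τ - t ≤ u x - csExt N s u x z).trans (le_abs_self _)

theorem csExt_superlevel_sdiff_ae_le (s z t : ℝ) (hout : ∀ᵐ x, x ∉ Ω → u x = 0) :
    ({x | t < csExt N s u x z} \ Ω : Set (Eu N)) ≤ᵐ[volume]
      {x | t ≤ |csExt N s u x z - u x|} := by
  filter_upwards [hout] with x hx ⟨ht, hxΩ⟩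
  change t ≤ |csExt N s u x z - u x|
  rw [hx hxΩ, sub_zero]
  exact (le_of_lt ht).trans (le_abs_self _)

theorem volume_csExt_superlevel_ne_top (hs : 0 < s) (hz : 0 < z) (hum : Measurable u)
    (hui : Integrable u) (hgag : gagliardoSq N s u ≠ ∞) (hΩ : volume Ω ≠ ∞)
    (hout : ∀ᵐ x, x ∉ Ω → u x = 0) (ht : 0 < t) :
    volume {x | t < csExt N s u x z} ≠ ∞ := by
  have hsdiff : volume ({x | t < csExt N s u x z} \ Ω) ≠ ∞ :=
    ne_top_of_le_ne_top (volume_le_abs_csExt_sub_ne_top hs hz hum hui hgag ht)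
      (measure_mono_ae (csExt_superlevel_sdiff_ae_le s z t hout))
  exact ne_top_of_le_ne_top (ENNReal.add_ne_top.2 ⟨hΩ, hsdiff⟩)
    ((measure_mono Set.subset_union_right).trans
      ((congrArg volume Set.union_sdiff_self.symm).trans_le (measure_union_le Ω _)))

theorem volume_real_csExt_superlevel_sdiff_le (hs : 0 < s) (hz : 0 < z) (hum : Measurable u)
    (hui : Integrable u) (hgag : gagliardoSq N s u ≠ ∞) (hout : ∀ᵐ x, x ∉ Ω → u x = 0)
    (ht : 0 < t) :
    volume.real ({x | t < csExt N s u x z} \ Ω) ≤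
      betaC N s * z ^ (2 * s) * gagliardoSqR N s u / t ^ 2 :=
  (ENNReal.toReal_mono (volume_le_abs_csExt_sub_ne_top hs hz hum hui hgag ht)
    (measure_mono_ae (csExt_superlevel_sdiff_ae_le s z t hout))).trans
    (volume_real_le_abs_csExt_sub_le hs hz hum hui hgag ht)

theorem superlevel_ae_le (hout : ∀ᵐ x, x ∉ Ω → u x = 0) (hτ : 0 ≤ τ) :
    ({x | τ < u x} : Set (Eu N)) ≤ᵐ[volume] Ω := by
  filter_upwards [hout] with x hx (hτx : τ < u x)
  by_contra hxΩ
  exact (hτ.trans_lt hτx).ne' (hx hxΩ)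

theorem volume_mul_le_volume_superlevel_of_lt_levelT (hτ0 : 0 ≤ τ) (hτ : τ < levelT N Ω u) :
    volume Ω * ENNReal.ofReal (1 - asym N Ω / 9) ≤ volume {x | τ < u x} := by
  have hne : { t : ℝ | 0 < t ∧ volume Ω * ENNReal.ofReal (1 - asym N Ω / 9) ≤
      volume {x | t < u x} }.Nonempty := by
    by_contra hempty
    rw [levelT, Set.not_nonempty_iff_eq_empty.1 hempty, Real.sSup_empty] at hτ
    exact hτ0.not_gt hτ
  obtain ⟨t, ⟨-, ht⟩, hτt⟩ := exists_lt_of_lt_csSup hne hτ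
  exact ht.trans (measure_mono fun x hx ↦ hτt.trans hx)

theorem volume_real_sdiff_superlevel_le (hum : Measurable u) (hout : ∀ᵐ x, x ∉ Ω → u x = 0)
    (hΩ : volume Ω ≠ ∞) (hτ0 : 0 ≤ τ) (hτ : τ < levelT N Ω u) :
    volume.real (Ω \ {x | τ < u x}) ≤ asym N Ω / 9 * volume.real Ω := by
  set F := {x | τ < u x}
  have hFΩ : F ≤ᵐ[volume] Ω := superlevel_ae_le hout hτ0
  have hFinter : F ≤ᵐ[volume] (Ω ∩ F : Set (Eu N)) := by
    filter_upwards [hFΩ] with x hx hxF using ⟨hx hxF, hxF⟩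
  have hΩF : volume.real Ω * (1 - asym N Ω / 9) ≤ volume.real (Ω ∩ F) :=
    calc volume.real Ω * (1 - asym N Ω / 9)
        ≤ volume.real Ω * (ENNReal.ofReal (1 - asym N Ω / 9)).toReal := by
          gcongr
          exact ENNReal.toReal_ofReal' ▸ le_max_left _ _
      _ ≤ volume.real F := by
          rw [measureReal_def, ← ENNReal.toReal_mul]
          exact ENNReal.toReal_mono (ne_top_of_le_ne_top hΩ (measure_mono_ae hFΩ))
            (volume_mul_le_volume_superlevel_of_lt_levelT hτ0 hτ)
      _ ≤ volume.real (Ω ∩ F) :=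
          ENNReal.toReal_mono (measure_ne_top_of_subset Set.inter_subset_left hΩ)
            (measure_mono_ae hFinter)
  have hsplit := measureReal_inter_add_sdiff (μ := volume) (s := Ω)
    (measurableSet_lt measurable_const hum : MeasurableSet F) hΩ
  linarith

theorem volume_real_symmDiff_csExt_superlevel_le (hs : 0 < s) (hz : 0 < z) (hum : Measurable u)
    (hui : Integrable u) (hgag : gagliardoSq N s u ≠ ∞) (hout : ∀ᵐ x, x ∉ Ω → u x = 0)
    (hΩ : volume Ω ≠ ∞) (ht : 0 < t) (htτ : t < τ) (hτ : τ < levelT N Ω u) :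
    volume.real (symmDiff Ω {x | t < csExt N s u x z}) ≤
      asym N Ω / 9 * volume.real Ω +
        betaC N s * z ^ (2 * s) * gagliardoSqR N s u / (τ - t) ^ 2 +
        betaC N s * z ^ (2 * s) * gagliardoSqR N s u / t ^ 2 := by
  have hτ0 := (ht.trans htτ).le
  have hF : volume {x | τ < u x} ≠ ∞ :=
    ne_top_of_le_ne_top hΩ (measure_mono_ae (superlevel_ae_le hout hτ0))
  refine (measureReal_symmDiff_le_sdiff_add_sdiff_add_sdiff hΩ hF).trans ?_
  gcongr
  · exact volume_real_sdiff_superlevel_le hum hout hΩ hτ0 hτ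
  · exact volume_real_superlevel_sdiff_csExt_superlevel_le hs hz hum hui hgag htτ
  · exact volume_real_csExt_superlevel_sdiff_le hs hz hum hui hgag hout ht

theorem volume_real_symmDiff_csExt_superlevel_le_third (hs : 0 < s) (hz : 0 < z)
    (hum : Measurable u) (hui : Integrable u) (hgag : gagliardoSq N s u ≠ ∞)
    (hout : ∀ᵐ x, x ∉ Ω → u x = 0) (hA : 0 < asym N Ω) (hT : 0 < levelT N Ω u)
    (ht1 : levelT N Ω u / 4 ≤ t) (ht2 : t ≤ 3 / 8 * levelT N Ω u)
    (hsmall : betaC N s * z ^ (2 * s) * gagliardoSqR N s u ≤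
      asym N Ω * volume.real Ω * (levelT N Ω u / 24) ^ 2) :
    volume.real (symmDiff Ω {x | t < csExt N s u x z}) ≤
      1 / 3 * (volume.real Ω * asym N Ω) := by
  set T := levelT N Ω u
  set D := betaC N s * z ^ (2 * s) * gagliardoSqR N s u
  have hAΩ : 0 ≤ asym N Ω * volume.real Ω := by positivity
  have energy_div_sq_le {δ : ℝ} (hδ : T / 4 ≤ δ) : D / δ ^ 2 ≤ asym N Ω * volume.real Ω / 36 := by
    have hδ0 : 0 < δ := by linarith
    rw [div_le_iff₀ (by positivity)]
    calc D ≤ asym N Ω * volume.real Ω * (T / 24) ^ 2 := hsmall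
      _ = asym N Ω * volume.real Ω / 36 * (T / 4) ^ 2 := by ring
      _ ≤ asym N Ω * volume.real Ω / 36 * δ ^ 2 := by gcongr
  have hbound := volume_real_symmDiff_csExt_superlevel_le (τ := 7 / 8 * T) hs hz hum hui hgag hout
    (volume_ne_top_of_asym_pos hA) (by linarith : 0 < t) (by linarith) (by linarith)
  linarith [energy_div_sq_le ht1, energy_div_sq_le (δ := 7 / 8 * T - t) (by linarith)]

theorem asymmetry_of_extension_level_sets_general [NeZero N] (hs : 0 < s)
    (hΩm : NullMeasurableSet Ω) (hA : 0 < asym N Ω) (hum : Measurable u) (hui : Integrable u)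
    (hout : ∀ᵐ x, x ∉ Ω → u x = 0) (hgag : gagliardoSq N s u ≠ ∞) (hT : 0 < levelT N Ω u)
    (ht1 : levelT N Ω u / 4 ≤ t) (ht2 : t ≤ 3 / 8 * levelT N Ω u) (hz : 0 < z)
    (hsmall : betaC N s * z ^ (2 * s) * gagliardoSqR N s u ≤
      asym N Ω * volume.real Ω * (levelT N Ω u / 24) ^ 2) :
    |volume.real {x | t < csExt N s u x z} - volume.real Ω| ≤
        1 / 3 * volume.real Ω * asym N Ω ∧
      asym N {x | t < csExt N s u x z} ≥ 1 / 5 * asym N Ω := by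
  have hΩ := volume_ne_top_of_asym_pos hA
  have hEm : NullMeasurableSet {x | t < csExt N s u x z} :=
    (measurableSet_lt measurable_const (measurable_csExt s z hum)).nullMeasurableSet
  have hE := volume_csExt_superlevel_ne_top hs hz hum hui hgag hΩ hout
    (by linarith : 0 < t)
  have hsymm := volume_real_symmDiff_csExt_superlevel_le_third hs hz hum hui hgag hout hA hT
    ht1 ht2 hsmall
  constructor
  · rw [abs_sub_comm, mul_assoc]
    exact (abs_measureReal_sub_le_measureReal_symmDiff' hΩm hEm hΩ hE).trans hsymm
  · have hasym := asym_ge_of_symmDiff_le hΩm hEm hE hA (by norm_num) hsymm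
    norm_num at hasym ⊢
    exact hasym

end LevelSets

section FirstMinimizer

theorem pos_and_mul_rpow_le_of_le_rpow {a b c s T z : ℝ} (hs : 0 < s) (hc : 0 < c) (hT : 0 ≤ T)
    (hz : 0 < z) (h : z ≤ (√a / (c * √b) * T) ^ (1 / s)) :
    0 < b ∧ 0 < T ∧ b * z ^ (2 * s) ≤ a * (T / c) ^ 2 := by
  set K := √a / (c * √b) * T
  have hK : 0 < K := by
    refine (by positivity : 0 ≤ K).lt_of_ne' fun hK ↦ ?_
    rw [hK, Real.zero_rpow (by positivity)] at h
    exact h.not_gt hz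
  have hb : 0 < b := Real.sqrt_pos.1 ((Real.sqrt_nonneg b).lt_of_ne' fun hb ↦ by simp [K, hb] at hK)
  have ha : 0 < a := Real.sqrt_pos.1 ((Real.sqrt_nonneg a).lt_of_ne' fun ha ↦ by simp [K, ha] at hK)
  refine ⟨hb, hT.lt_of_ne' fun hT0 ↦ by simp [K, hT0] at hK, ?_⟩
  have hzs : z ^ s ≤ K := by
    rw [one_div] at h
    exact (Real.le_rpow_inv_iff_of_pos hz.le hK.le hs).1 h
  calc b * z ^ (2 * s) = b * (z ^ s) ^ 2 := by
        rw [mul_comm 2 s, Real.rpow_mul hz.le, Real.rpow_two]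
    _ ≤ b * K ^ 2 := by gcongr
    _ = a * (T / c) ^ 2 := by
        rw [mul_pow, div_pow, mul_pow, Real.sq_sqrt ha.le, Real.sq_sqrt hb.le]
        field_simp

theorem IsFirstMinimizer.integrable {N : ℕ} {s q : ℝ} {Ω : Set (Eu N)} {u : Eu N → ℝ}
    (hu : IsFirstMinimizer N s q Ω u) (hq : 1 ≤ q) (hΩ : volume Ω ≠ ∞) :
    Integrable u := by
  obtain ⟨hum, hu0, hout, hnorm, -⟩ := hu
  have : IsFiniteMeasure (volume.restrict Ω) := isFiniteMeasure_restrict.2 hΩ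
  have hint : Integrable (fun x ↦ u x ^ q) (volume.restrict Ω) :=
    .of_integral_ne_zero (hnorm.trans_ne one_ne_zero)
  have hon : IntegrableOn u Ω :=
    integrable_of_integrable_rpow hq hum.aestronglyMeasurable hu0 hint
  exact hon.integrable_of_ae_notMem_eq_zero hout

end FirstMinimizer

/-- **Proposition 4.4**: for `T/4 ≤ t ≤ (3/8)T` and
`0 < z ≤ ((√(A(Ω)|Ω|)/(24√(β_{N,s} λ))) T)^{1/s}`, the level set
`E_{t,z} = {U(·,z) > t}` of the extension satisfies `||E_{t,z}| - |Ω|| ≤ |Ω| A(Ω)/3`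
and `A(E_{t,z}) ≥ A(Ω)/5`. -/
theorem asymmetry_of_extension_level_sets
    (N : ℕ) (hN : 2 ≤ N) (s q : ℝ) (hs0 : 0 < s) (hs1 : s < 1)
    (hq1 : 1 ≤ q) (hq2 : q < 2 * N / ((N : ℝ) - 2 * s))
    (Ω : Set (Eu N)) (hΩo : IsOpen Ω) (hΩb : Bornology.IsBounded Ω)
    (hA : 0 < asym N Ω)
    (u : Eu N → ℝ) (hu : IsFirstMinimizer N s q Ω u)
    (t : ℝ) (ht1 : levelT N Ω u / 4 ≤ t) (ht2 : t ≤ 3 / 8 * levelT N Ω u)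
    (z : ℝ) (hz0 : 0 < z)
    (hz1 : z ≤ (Real.sqrt (asym N Ω * (volume Ω).toReal)
        / (24 * Real.sqrt (betaC N s * sobolevConst N s q Ω))
        * levelT N Ω u) ^ (1 / s)) :
    |(volume {x | t < csExt N s u x z}).toReal - (volume Ω).toReal|
        ≤ 1 / 3 * (volume Ω).toReal * asym N Ω ∧
    asym N {x | t < csExt N s u x z} ≥ 1 / 5 * asym N Ω := by
  have : NeZero N := ⟨by omega⟩
  have hT0 : 0 ≤ levelT N Ω u := Real.sSup_nonneg fun _ ht ↦ ht.1.le
  obtain ⟨hβlam, hT, hsmall⟩ := pos_and_mul_rpow_le_of_le_rpow hs0 (by norm_num) hT0 hz0 hz1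
  have hui := hu.integrable hq1 (volume_ne_top_of_asym_pos hA)
  obtain ⟨hum, -, hout, -, hlam, -⟩ := hu
  rw [← hlam] at hβlam hsmall
  have hgag : gagliardoSq N s u ≠ ∞ :=
    (ENNReal.toReal_ne_zero.1 (right_ne_zero_of_mul hβlam.ne')).2
  exact asymmetry_of_extension_level_sets_general hs0 hΩo.measurableSet.nullMeasurableSet hA hum
    hui hout hgag hT ht1 ht2 hz0 (by rwa [mul_right_comm])
end
end

section
/- Let N ≥ 2 and 1 ≤ q < 2N/(N−2) (with no upper restriction on q beyond q < ∞ when N = 2), and let Ω ⊆ ℝ^N be an open bounded nonempty set. Then limsup_{s↗1} (1−s) λ_{s,q}(Ω) ≤ (ω_N/2) λ_{1,q}(Ω), where ω_N is the Lebesgue measure of the unit ball in ℝ^N and λ_{1,q}(Ω) = inf { ∫_Ω |∇u|² dx : u ∈ C_c^∞(Ω), ‖u‖_{L^q(Ω)} = 1 }. -/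
open MeasureTheory Filter
open scoped ENNReal NNReal Topology FourierTransform RealInnerProductSpace

noncomputable section

/-- The sharp Poincaré–Sobolev constant for the Dirichlet Laplacian:
`λ_{1,q}(Ω) = inf { ∫_Ω |∇u|² : u ∈ C_c^∞(Ω), ‖u‖_{L^q(Ω)} = 1 }`. -/
def sobolevConst1 (N : ℕ) (q : ℝ) (Ω : Set (Eu N)) : ℝ :=
  sInf { c : ℝ | ∃ u : Eu N → ℝ, ContDiff ℝ (⊤ : ℕ∞) u ∧ HasCompactSupport u ∧
    tsupport u ⊆ Ω ∧ (∫ x in Ω, |u x| ^ q) = 1 ∧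
    c = ∫ x in Ω, ‖fderiv ℝ u x‖ ^ 2 }

/-- `ω_N`, the Lebesgue measure of the unit ball of `ℝ^N`. -/
def omegaN (N : ℕ) : ℝ := (volume (Metric.ball (0 : Eu N) 1)).toReal

/-!
Substituting `y = x + h`, the seminorm `[u]²` becomes the integral of `‖u(· + h) - u‖²_{L²}` against
the kernel `|h|^{-(N+2s)}`. For `|h| ≥ 1` this is at most `4 ‖u‖²_{L²}`, and the contribution stays
bounded as `s ↗ 1`. For `|h| < 1`, Jensen's inequality along the segment from `x` to `x + h` gives
`‖u(· + h) - u‖²_{L²} ≤ ∫ |∇u · h|²`; rotation invariance replaces `|∇u · h|²` by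
`|∇u|² |h|² / N`, and `∫_{|h| < 1} |h|^{2-N-2s} dh = N ω_N / (2 (1 - s))`. Hence
`(1 - s) [u]² ≤ (ω_N / 2) ∫ |∇u|² + O(1 - s)` for every test function `u`, in particular for
almost minimizers of the Dirichlet energy.
-/

section Radial

open Metric Set Module

variable {E : Type*} [NormedAddCommGroup E] [MeasurableSpace E] [BorelSpace E]

lemma setLIntegral_norm_preimage_mul (μ : Measure E) {S : Set ℝ} (hS : MeasurableSet S)
    (k : ℝ → ℝ≥0∞) (G : E → ℝ≥0∞) :
    ∫⁻ h in norm ⁻¹' S, k ‖h‖ * G h ∂μ = ∫⁻ h, S.indicator k ‖h‖ * G h ∂μ := by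
  rw [← lintegral_indicator (measurable_norm hS)]
  refine lintegral_congr fun h => ?_
  by_cases hh : ‖h‖ ∈ S <;> simp [indicator, hh]

section Polar

variable [NormedSpace ℝ E] [FiniteDimensional ℝ E] [Nontrivial E]
  (μ : Measure E) [μ.IsAddHaarMeasure]

lemma lintegral_fun_norm_addHaar {f : ℝ → ℝ≥0∞} (hf : Measurable f) :
    ∫⁻ x, f ‖x‖ ∂μ = finrank ℝ E * μ (ball 0 1) *
      ∫⁻ y in Ioi (0 : ℝ), ENNReal.ofReal (y ^ (finrank ℝ E - 1)) * f y := by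
  calc ∫⁻ x, f ‖x‖ ∂μ
      = ∫⁻ x : ({0}ᶜ : Set E), f ‖x.1‖ ∂(μ.comap (↑)) := by
        rw [lintegral_subtype_comap (measurableSet_singleton _).compl fun x => f ‖x‖,
          restrict_compl_singleton]
    _ = ∫⁻ x, f x.2 ∂μ.toSphere.prod (.volumeIoiPow (finrank ℝ E - 1)) := by
        simpa using μ.measurePreserving_homeomorphUnitSphereProd.lintegral_comp_emb
          (Homeomorph.measurableEmbedding _) (f ∘ Subtype.val ∘ Prod.snd)
    _ = finrank ℝ E * μ (ball 0 1) * ∫⁻ y : Ioi (0 : ℝ), f y ∂.volumeIoiPow (finrank ℝ E - 1) := by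
        rw [lintegral_prod _ (by fun_prop)]
        simp [mul_comm]
    _ = _ := by
        rw [Measure.volumeIoiPow, lintegral_withDensity_eq_lintegral_mul _ (by fun_prop)
          (by fun_prop)]
        exact congrArg _ (lintegral_subtype_comap measurableSet_Ioi
          fun y => ENNReal.ofReal (y ^ (finrank ℝ E - 1)) * f y)

lemma setLIntegral_norm_preimage_rpow {S : Set ℝ} (hS : MeasurableSet S) (a : ℝ) :
    ∫⁻ h in norm ⁻¹' S, ENNReal.ofReal (‖h‖ ^ a) ∂μ = finrank ℝ E * μ (ball 0 1) *
      ∫⁻ y in Ioi 0 ∩ S, ENNReal.ofReal (y ^ (finrank ℝ E - 1 + a)) := by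
  have hpow : ∀ y ∈ Ioi (0 : ℝ), ENNReal.ofReal (y ^ (finrank ℝ E - 1)) *
      S.indicator (fun r => ENNReal.ofReal (r ^ a)) y =
      S.indicator (fun r => ENNReal.ofReal (r ^ (finrank ℝ E - 1 + a))) y := by
    intro y hy
    have hy : 0 < y := hy
    by_cases hyS : y ∈ S
    · rw [indicator_of_mem hyS, indicator_of_mem hyS, ← ENNReal.ofReal_mul (by positivity),
        Real.rpow_add hy, ← Nat.cast_pred finrank_pos, Real.rpow_natCast]
    · simp [hyS]
  calc ∫⁻ h in norm ⁻¹' S, ENNReal.ofReal (‖h‖ ^ a) ∂μ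
      = ∫⁻ h, S.indicator (fun r => ENNReal.ofReal (r ^ a)) ‖h‖ ∂μ := by
        simpa using setLIntegral_norm_preimage_mul μ hS (fun r => ENNReal.ofReal (r ^ a)) 1
    _ = _ := by
        rw [lintegral_fun_norm_addHaar μ (Measurable.indicator (by fun_prop) hS),
          setLIntegral_congr_fun measurableSet_Ioi hpow, setLIntegral_indicator hS, inter_comm]

lemma setLIntegral_Ioo_rpow {b : ℝ} (hb : -1 < b) :
    ∫⁻ y in Ioo (0 : ℝ) 1, ENNReal.ofReal (y ^ b) = ENNReal.ofReal (b + 1)⁻¹ := by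
  rw [← ofReal_integral_eq_lintegral_ofReal
    ((intervalIntegral.integrableOn_Ioo_rpow_iff zero_lt_one).2 hb)
    (ae_restrict_of_forall_mem measurableSet_Ioo fun y hy => Real.rpow_nonneg hy.1.le b),
    ← integral_Ioc_eq_integral_Ioo, ← intervalIntegral.integral_of_le zero_le_one,
    integral_rpow (.inl hb), Real.one_rpow, Real.zero_rpow (by linarith), sub_zero, one_div]

lemma setLIntegral_Ici_rpow {b : ℝ} (hb : b < -1) :
    ∫⁻ y in Ici (1 : ℝ), ENNReal.ofReal (y ^ b) = ENNReal.ofReal (-(b + 1))⁻¹ := by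
  rw [setLIntegral_congr Ioi_ae_eq_Ici.symm,
    ← ofReal_integral_eq_lintegral_ofReal (integrableOn_Ioi_rpow_of_lt hb zero_lt_one)
    (ae_restrict_of_forall_mem measurableSet_Ioi fun y hy =>
      Real.rpow_nonneg (zero_lt_one.trans hy).le b),
    integral_Ioi_rpow_of_lt hb zero_lt_one, Real.one_rpow, inv_neg, neg_div, one_div]

lemma setLIntegral_ball_norm_rpow {a : ℝ} (ha : -finrank ℝ E < a) :
    ∫⁻ h in ball 0 1, ENNReal.ofReal (‖h‖ ^ a) ∂μ =
      ENNReal.ofReal (finrank ℝ E * μ.real (ball 0 1) / (finrank ℝ E + a)) := by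
  have hball : ball (0 : E) 1 = norm ⁻¹' Iio 1 := by ext; simp
  rw [hball, setLIntegral_norm_preimage_rpow μ measurableSet_Iio, ← hball, Ioi_inter_Iio,
    setLIntegral_Ioo_rpow (by linarith), div_eq_mul_inv, ENNReal.ofReal_mul (by positivity),
    ENNReal.ofReal_mul (by positivity), ENNReal.ofReal_natCast, ofReal_measureReal]
  ring_nf

lemma setLIntegral_compl_ball_norm_rpow {a : ℝ} (ha : a < -finrank ℝ E) :
    ∫⁻ h in (ball 0 1)ᶜ, ENNReal.ofReal (‖h‖ ^ a) ∂μ =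
      ENNReal.ofReal (finrank ℝ E * μ.real (ball 0 1) / -(finrank ℝ E + a)) := by
  have hcompl : (ball (0 : E) 1)ᶜ = norm ⁻¹' Ici 1 := by ext; simp
  rw [hcompl, setLIntegral_norm_preimage_rpow μ measurableSet_Ici,
    inter_eq_right.2 (Ici_subset_Ioi.2 zero_lt_one),
    setLIntegral_Ici_rpow (by linarith), div_eq_mul_inv, ENNReal.ofReal_mul (by positivity),
    ENNReal.ofReal_mul (by positivity), ENNReal.ofReal_natCast, ofReal_measureReal]
  ring_nf

end Polar

section InnerProduct

variable [InnerProductSpace ℝ E] [FiniteDimensional ℝ E]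

lemma lintegral_radial_mul_enorm_inner_sq_congr (k : ℝ → ℝ≥0∞) {v w : E} (hvw : ‖v‖ = ‖w‖) :
    ∫⁻ h, k ‖h‖ * ‖⟪v, h⟫‖ₑ ^ 2 = ∫⁻ h, k ‖h‖ * ‖⟪w, h⟫‖ₑ ^ 2 := by
  let R := (ℝ ∙ (v - w))ᗮ.reflection
  have hRv : R v = w := Submodule.reflection_sub hvw
  rw [← R.measurePreserving.lintegral_comp_emb R.toHomeomorph.measurableEmbedding
    (fun h => k ‖h‖ * ‖⟪w, h⟫‖ₑ ^ 2)]
  simp_rw [← hRv, R.inner_map_map, R.norm_map]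

lemma finrank_mul_lintegral_radial_mul_enorm_inner_sq {k : ℝ → ℝ≥0∞} (hk : Measurable k) (v : E) :
    finrank ℝ E * ∫⁻ h, k ‖h‖ * ‖⟪v, h⟫‖ₑ ^ 2 = ‖v‖ₑ ^ 2 * ∫⁻ h : E, k ‖h‖ * ‖h‖ₑ ^ 2 := by
  let b := stdOrthonormalBasis ℝ E
  have hcoord (i : Fin (finrank ℝ E)) : ∫⁻ h, k ‖h‖ * ‖⟪v, h⟫‖ₑ ^ 2 =
      ‖v‖ₑ ^ 2 * ∫⁻ h, k ‖h‖ * ‖⟪b i, h⟫‖ₑ ^ 2 := by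
    rw [lintegral_radial_mul_enorm_inner_sq_congr k (w := ‖v‖ • b i) (by simp [norm_smul]),
      ← lintegral_const_mul _ (by fun_prop)]
    refine lintegral_congr fun h => ?_
    rw [real_inner_smul_left, enorm_mul, enorm_norm, mul_pow, mul_left_comm]
  have hparseval (h : E) : ∑ i, ‖⟪b i, h⟫‖ₑ ^ 2 = ‖h‖ₑ ^ 2 := by
    simp_rw [← ofReal_norm, ← ENNReal.ofReal_pow (norm_nonneg _)]
    rw [← ENNReal.ofReal_sum_of_nonneg fun i _ => by positivity, b.sum_sq_norm_inner_right]
  calc finrank ℝ E * ∫⁻ h, k ‖h‖ * ‖⟪v, h⟫‖ₑ ^ 2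
      = ∑ i, ‖v‖ₑ ^ 2 * ∫⁻ h, k ‖h‖ * ‖⟪b i, h⟫‖ₑ ^ 2 := by
        simp [← hcoord]
    _ = ‖v‖ₑ ^ 2 * ∫⁻ h, k ‖h‖ * ∑ i, ‖⟪b i, h⟫‖ₑ ^ 2 := by
        simp_rw [Finset.mul_sum]
        rw [← Finset.mul_sum, ← lintegral_finsetSum _ fun i _ => by fun_prop]
    _ = ‖v‖ₑ ^ 2 * ∫⁻ h, k ‖h‖ * ‖h‖ₑ ^ 2 := by simp_rw [hparseval]

lemma setLIntegral_ball_norm_rpow_mul_enorm_apply_sq [Nontrivial E] {a : ℝ}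
    (ha : -(finrank ℝ E + 2) < a) (L : E →L[ℝ] ℝ) :
    ∫⁻ h in ball 0 1, ENNReal.ofReal (‖h‖ ^ a) * ‖L h‖ₑ ^ 2 =
      ENNReal.ofReal (volume.real (ball (0 : E) 1) / (finrank ℝ E + 2 + a)) * ‖L‖ₑ ^ 2 := by
  let v := (InnerProductSpace.toDual ℝ E).symm L
  have hv : ‖v‖ₑ = ‖L‖ₑ := by
    rw [← ofReal_norm, LinearIsometryEquiv.norm_map, ofReal_norm]
  have hball : ball (0 : E) 1 = norm ⁻¹' Iio 1 := by ext; simp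
  have haverage : finrank ℝ E * ∫⁻ h in ball 0 1, ENNReal.ofReal (‖h‖ ^ a) * ‖L h‖ₑ ^ 2 =
      ‖L‖ₑ ^ 2 * ∫⁻ h in ball (0 : E) 1, ENNReal.ofReal (‖h‖ ^ a) * ‖h‖ₑ ^ 2 := by
    rw [hball, setLIntegral_norm_preimage_mul _ measurableSet_Iio (fun r => ENNReal.ofReal (r ^ a)),
      setLIntegral_norm_preimage_mul _ measurableSet_Iio (fun r => ENNReal.ofReal (r ^ a)), ← hv,
      ← finrank_mul_lintegral_radial_mul_enorm_inner_sq
        (Measurable.indicator (by fun_prop) measurableSet_Iio)]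
    simp only [v, InnerProductSpace.toDual_symm_apply]
  have hradial : ∫⁻ h in ball (0 : E) 1, ENNReal.ofReal (‖h‖ ^ a) * ‖h‖ₑ ^ 2 =
      finrank ℝ E * ENNReal.ofReal (volume.real (ball (0 : E) 1) / (finrank ℝ E + 2 + a)) := by
    calc ∫⁻ h in ball (0 : E) 1, ENNReal.ofReal (‖h‖ ^ a) * ‖h‖ₑ ^ 2
        = ∫⁻ h in ball (0 : E) 1, ENNReal.ofReal (‖h‖ ^ (a + 2)) := by
          refine lintegral_congr_ae (ae_restrict_of_ae ?_)
          filter_upwards [Measure.ae_ne volume (0 : E)] with h hh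
          rw [← ofReal_norm, ← ENNReal.ofReal_pow (by positivity),
            ← ENNReal.ofReal_mul (by positivity), Real.rpow_add (norm_pos_iff.2 hh),
            Real.rpow_two]
      _ = _ := by
          rw [setLIntegral_ball_norm_rpow _ (by linarith), mul_div_assoc,
            ENNReal.ofReal_mul (by positivity), ENNReal.ofReal_natCast, add_assoc, add_comm a]
  rw [hradial, mul_left_comm] at haverage
  rw [(ENNReal.mul_right_inj (by simp [finrank_pos.ne']) (ENNReal.natCast_ne_top _)).1 haverage,
    mul_comm]

end InnerProduct

end Radial

section Translate

lemma rpow_lintegral_enorm_le {α F : Type*} [MeasurableSpace α] [NormedAddCommGroup F]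
    {μ : Measure α} [IsProbabilityMeasure μ] {p : ℝ} (hp : 1 ≤ p) {f : α → F}
    (hf : AEStronglyMeasurable f μ) :
    (∫⁻ x, ‖f x‖ₑ ∂μ) ^ p ≤ ∫⁻ x, ‖f x‖ₑ ^ p ∂μ := by
  have hp0 : 0 < p := by linarith
  simpa [eLpNorm', ← ENNReal.rpow_mul, inv_mul_cancel₀ hp0.ne'] using
    ENNReal.rpow_le_rpow (eLpNorm'_le_eLpNorm'_of_exponent_le one_pos hp μ hf) hp0.le

lemma lintegral_enorm_translate_sub_rpow_le {G F : Type*} [AddGroup G] [MeasurableSpace G]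
    [MeasurableAdd G] [NormedAddCommGroup F] {μ : Measure G} [μ.IsAddRightInvariant] {p : ℝ}
    (hp : 1 ≤ p) {f : G → F} (hf : AEStronglyMeasurable f μ) (h : G) :
    ∫⁻ x, ‖f (x + h) - f x‖ₑ ^ p ∂μ ≤ 2 ^ p * ∫⁻ x, ‖f x‖ₑ ^ p ∂μ := by
  have hp0 : 0 ≤ p := by linarith
  have htwo : (2 : ℝ≥0∞) ^ (p - 1) * 2 = 2 ^ p := by
    conv_rhs => rw [← sub_add_cancel p 1, ENNReal.rpow_add _ _ two_ne_zero ENNReal.ofNat_ne_top,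
      ENNReal.rpow_one]
  calc ∫⁻ x, ‖f (x + h) - f x‖ₑ ^ p ∂μ
      ≤ ∫⁻ x, 2 ^ (p - 1) * (‖f (x + h)‖ₑ ^ p + ‖f x‖ₑ ^ p) ∂μ :=
        lintegral_mono fun x => (ENNReal.rpow_le_rpow enorm_sub_le hp0).trans
          (ENNReal.rpow_add_le_mul_rpow_add_rpow _ _ hp)
    _ = 2 ^ (p - 1) * (∫⁻ x, ‖f (x + h)‖ₑ ^ p ∂μ + ∫⁻ x, ‖f x‖ₑ ^ p ∂μ) := by
        rw [lintegral_const_mul' _ _ (by simp), lintegral_add_right' _ (hf.enorm.pow_const p)]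
    _ = 2 ^ p * ∫⁻ x, ‖f x‖ₑ ^ p ∂μ := by
        rw [lintegral_add_right_eq_self fun x => ‖f x‖ₑ ^ p, ← two_mul, ← mul_assoc, htwo]

variable {E F : Type*} [NormedAddCommGroup E] [NormedSpace ℝ E]
  [NormedAddCommGroup F] [NormedSpace ℝ F] {f : E → F}

lemma enorm_translate_sub_le_lintegral_fderiv (hf : ContDiff ℝ 1 f) (x h : E) :
    ‖f (x + h) - f x‖ₑ ≤ ∫⁻ t in Set.Icc (0 : ℝ) 1, ‖fderiv ℝ f (x + t • h) h‖ₑ := by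
  have hderiv (t : ℝ) : HasDerivAt (fun t : ℝ => f (x + t • h)) (fderiv ℝ f (x + t • h) h) t := by
    have hline : HasDerivAt (fun t : ℝ => x + t • h) h t := by
      simpa using ((hasDerivAt_id t).smul_const h).const_add x
    exact (hf.differentiable one_ne_zero _).hasFDerivAt.comp_hasDerivAt t hline
  have hline : ContDiff ℝ 1 fun t : ℝ => f (x + t • h) := by fun_prop
  simpa [(hderiv _).deriv] using
    enorm_sub_le_lintegral_deriv_of_contDiffOn_Icc hline.contDiffOn zero_le_one

lemma lintegral_enorm_translate_sub_rpow_le_fderiv [MeasurableSpace E] [BorelSpace E]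
    [SecondCountableTopology E] {μ : Measure E} [SFinite μ] [μ.IsAddRightInvariant] {p : ℝ}
    (hp : 1 ≤ p) (hf : ContDiff ℝ 1 f) (h : E) :
    ∫⁻ x, ‖f (x + h) - f x‖ₑ ^ p ∂μ ≤ ∫⁻ x, ‖fderiv ℝ f x h‖ₑ ^ p ∂μ := by
  have : Continuous (fderiv ℝ f) := hf.continuous_fderiv one_ne_zero
  have : IsProbabilityMeasure (volume.restrict (Set.Icc (0 : ℝ) 1)) := ⟨by simp⟩
  calc ∫⁻ x, ‖f (x + h) - f x‖ₑ ^ p ∂μ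
      ≤ ∫⁻ x, (∫⁻ t in Set.Icc (0 : ℝ) 1, ‖fderiv ℝ f (x + t • h) h‖ₑ ^ p) ∂μ := by
        refine lintegral_mono fun x => (ENNReal.rpow_le_rpow
          (enorm_translate_sub_le_lintegral_fderiv hf x h) (by linarith)).trans ?_
        exact rpow_lintegral_enorm_le hp (Continuous.aestronglyMeasurable (by fun_prop))
    _ = ∫⁻ t in Set.Icc (0 : ℝ) 1, ∫⁻ x, ‖fderiv ℝ f (x + t • h) h‖ₑ ^ p ∂μ := by
        have hjoint : Continuous fun z : E × ℝ => fderiv ℝ f (z.1 + z.2 • h) h := by fun_prop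
        exact lintegral_lintegral_swap (hjoint.enorm.measurable.pow_const p).aemeasurable
    _ = ∫⁻ _t in Set.Icc (0 : ℝ) 1, ∫⁻ x, ‖fderiv ℝ f x h‖ₑ ^ p ∂μ :=
        lintegral_congr fun t =>
          lintegral_add_right_eq_self (fun x => ‖fderiv ℝ f x h‖ₑ ^ p) (t • h)
    _ = ∫⁻ x, ‖fderiv ℝ f x h‖ₑ ^ p ∂μ := by simp

end Translate

lemma lintegral_enorm_sq_eq_ofReal_integral {X F : Type*} [TopologicalSpace X] [MeasurableSpace X]
    [OpensMeasurableSpace X] {μ : Measure X} [IsFiniteMeasureOnCompacts μ] [NormedAddCommGroup F]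
    {f : X → F} (hf : Continuous f) (hcs : HasCompactSupport f) :
    ∫⁻ x, ‖f x‖ₑ ^ 2 ∂μ = ENNReal.ofReal (∫ x, ‖f x‖ ^ 2 ∂μ) := by
  have hint : Integrable (fun x => ‖f x‖ ^ 2) μ :=
    Continuous.integrable_of_hasCompactSupport (by fun_prop)
      (hcs.comp_left (g := fun y => ‖y‖ ^ 2) (by simp))
  rw [ofReal_integral_eq_lintegral_ofReal hint (ae_of_all _ fun x => by positivity)]
  simp_rw [ENNReal.ofReal_pow (norm_nonneg _), ofReal_norm]

section Gagliardo

open Metric Module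

variable {N : ℕ} {s : ℝ} {u : Eu N → ℝ}

lemma gagliardoSq_eq_lintegral_translate (s : ℝ) (hu : Measurable u) :
    gagliardoSq N s u = ∫⁻ h : Eu N, ENNReal.ofReal (‖h‖ ^ (-(N + 2 * s))) *
      ∫⁻ x, ‖u (x + h) - u x‖ₑ ^ 2 := by
  calc gagliardoSq N s u
      = ∫⁻ x, ∫⁻ h : Eu N, ENNReal.ofReal (‖h‖ ^ (-(N + 2 * s))) * ‖u (x + h) - u x‖ₑ ^ 2 := by
        refine lintegral_congr fun x => ?_
        rw [← lintegral_add_left_eq_self _ x]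
        refine lintegral_congr fun h => ?_
        rw [sub_add_cancel_left, norm_neg, abs_sub_comm, ← Real.norm_eq_abs, div_eq_inv_mul,
          ← Real.rpow_neg (norm_nonneg h), ENNReal.ofReal_mul (by positivity),
          ENNReal.ofReal_pow (norm_nonneg _), ofReal_norm]
    _ = ∫⁻ h : Eu N, ∫⁻ x, ENNReal.ofReal (‖h‖ ^ (-(N + 2 * s))) * ‖u (x + h) - u x‖ₑ ^ 2 := by
        refine lintegral_lintegral_swap (Measurable.aemeasurable ?_)
        simp only [Function.uncurry_def]
        fun_prop
    _ = _ := lintegral_congr fun h => lintegral_const_mul _ (by fun_prop)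

lemma omegaN_eq_volume_real_ball (N : ℕ) : omegaN N = volume.real (ball (0 : Eu N) 1) := rfl

lemma omegaN_pos (N : ℕ) : 0 < omegaN N :=
  ENNReal.toReal_pos (measure_ball_pos _ _ one_pos).ne' measure_ball_lt_top.ne

variable [NeZero N]

lemma setLIntegral_ball_kernel_mul_translate_le (hs : s < 1) (hu : ContDiff ℝ 1 u) :
    ∫⁻ h in ball (0 : Eu N) 1, ENNReal.ofReal (‖h‖ ^ (-(N + 2 * s))) *
        ∫⁻ x, ‖u (x + h) - u x‖ₑ ^ 2 ≤
      ENNReal.ofReal (omegaN N / (2 * (1 - s))) * ∫⁻ x, ‖fderiv ℝ u x‖ₑ ^ 2 := by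
  have : Continuous (fderiv ℝ u) := hu.continuous_fderiv one_ne_zero
  have hjoint : Measurable fun z : Eu N × Eu N => fderiv ℝ u z.2 z.1 :=
    Continuous.measurable (by fun_prop)
  calc ∫⁻ h in ball (0 : Eu N) 1, ENNReal.ofReal (‖h‖ ^ (-(N + 2 * s))) *
        ∫⁻ x, ‖u (x + h) - u x‖ₑ ^ 2
      ≤ ∫⁻ h in ball (0 : Eu N) 1, ENNReal.ofReal (‖h‖ ^ (-(N + 2 * s))) *
          ∫⁻ x, ‖fderiv ℝ u x h‖ₑ ^ 2 := by
        refine lintegral_mono fun h => mul_le_mul_right ?_ _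
        simpa only [ENNReal.rpow_two] using
          lintegral_enorm_translate_sub_rpow_le_fderiv (μ := volume) one_le_two hu h
    _ = ∫⁻ h in ball (0 : Eu N) 1, ∫⁻ x, ENNReal.ofReal (‖h‖ ^ (-(N + 2 * s))) *
          ‖fderiv ℝ u x h‖ₑ ^ 2 :=
        lintegral_congr fun h => (lintegral_const_mul _ (by fun_prop)).symm
    _ = ∫⁻ x, ∫⁻ h in ball (0 : Eu N) 1, ENNReal.ofReal (‖h‖ ^ (-(N + 2 * s))) *
          ‖fderiv ℝ u x h‖ₑ ^ 2 := by
        refine lintegral_lintegral_swap (Measurable.aemeasurable ?_)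
        simp only [Function.uncurry_def]
        fun_prop
    _ = ∫⁻ x, ENNReal.ofReal (omegaN N / (2 * (1 - s))) * ‖fderiv ℝ u x‖ₑ ^ 2 := by
        refine lintegral_congr fun x => ?_
        rw [setLIntegral_ball_norm_rpow_mul_enorm_apply_sq
          (by rw [finrank_euclideanSpace_fin]; linarith), finrank_euclideanSpace_fin,
          omegaN_eq_volume_real_ball]
        ring_nf
    _ = _ := lintegral_const_mul _ (by fun_prop)

lemma setLIntegral_compl_ball_kernel_mul_translate_le (hs : 0 < s) (hu : Measurable u) :
    ∫⁻ h in (ball (0 : Eu N) 1)ᶜ, ENNReal.ofReal (‖h‖ ^ (-(N + 2 * s))) *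
        ∫⁻ x, ‖u (x + h) - u x‖ₑ ^ 2 ≤
      ENNReal.ofReal (2 * N * omegaN N / s) * ∫⁻ x, ‖u x‖ₑ ^ 2 := by
  calc ∫⁻ h in (ball (0 : Eu N) 1)ᶜ, ENNReal.ofReal (‖h‖ ^ (-(N + 2 * s))) *
        ∫⁻ x, ‖u (x + h) - u x‖ₑ ^ 2
      ≤ ∫⁻ h in (ball (0 : Eu N) 1)ᶜ, ENNReal.ofReal (‖h‖ ^ (-(N + 2 * s))) *
          (2 ^ 2 * ∫⁻ x, ‖u x‖ₑ ^ 2) := by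
        refine lintegral_mono fun h => mul_le_mul_right ?_ _
        simpa only [ENNReal.rpow_two] using
          lintegral_enorm_translate_sub_rpow_le (μ := volume) one_le_two
            hu.aestronglyMeasurable h
    _ = ENNReal.ofReal (N * omegaN N / (2 * s)) * (ENNReal.ofReal 4 * ∫⁻ x, ‖u x‖ₑ ^ 2) := by
        rw [lintegral_mul_const _ (by fun_prop), setLIntegral_compl_ball_norm_rpow _
          (by rw [finrank_euclideanSpace_fin]; linarith), finrank_euclideanSpace_fin,
          omegaN_eq_volume_real_ball]
        norm_num
    _ = ENNReal.ofReal (2 * N * omegaN N / s) * ∫⁻ x, ‖u x‖ₑ ^ 2 := by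
        have := omegaN_pos N
        rw [← mul_assoc, ← ENNReal.ofReal_mul (by positivity)]
        congr 2
        field_simp
        norm_num

lemma gagliardoSq_le (hs : 0 < s) (hs1 : s < 1) (hu : ContDiff ℝ 1 u) :
    gagliardoSq N s u ≤
      ENNReal.ofReal (omegaN N / (2 * (1 - s))) * (∫⁻ x, ‖fderiv ℝ u x‖ₑ ^ 2) +
        ENNReal.ofReal (2 * N * omegaN N / s) * ∫⁻ x, ‖u x‖ₑ ^ 2 := by
  have hum : Measurable u := hu.continuous.measurable
  rw [gagliardoSq_eq_lintegral_translate s hum,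
    ← lintegral_add_compl _ (measurableSet_ball (x := (0 : Eu N)) (ε := 1))]
  exact add_le_add (setLIntegral_ball_kernel_mul_translate_le hs1 hu)
    (setLIntegral_compl_ball_kernel_mul_translate_le hs hum)

lemma one_sub_mul_gagliardoSqR_le (hs : 0 < s) (hs1 : s < 1) (hu : ContDiff ℝ 1 u)
    (hcs : HasCompactSupport u) :
    (1 - s) * gagliardoSqR N s u ≤ omegaN N / 2 * (∫ x, ‖fderiv ℝ u x‖ ^ 2) +
      (1 - s) * (2 * N * omegaN N / s * ∫ x, ‖u x‖ ^ 2) := by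
  have hω := omegaN_pos N
  have hs1' : 0 < 1 - s := sub_pos.2 hs1
  have hle := gagliardoSq_le hs hs1 hu
  rw [lintegral_enorm_sq_eq_ofReal_integral (hu.continuous_fderiv one_ne_zero) (hcs.fderiv ℝ),
    lintegral_enorm_sq_eq_ofReal_integral hu.continuous hcs,
    ← ENNReal.ofReal_mul (by positivity), ← ENNReal.ofReal_mul (by positivity),
    ← ENNReal.ofReal_add (by positivity) (by positivity)] at hle
  calc (1 - s) * gagliardoSqR N s u
      ≤ (1 - s) * (omegaN N / (2 * (1 - s)) * (∫ x, ‖fderiv ℝ u x‖ ^ 2) +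
          2 * N * omegaN N / s * ∫ x, ‖u x‖ ^ 2) :=
        mul_le_mul_of_nonneg_left (ENNReal.toReal_le_of_le_ofReal (by positivity) hle) hs1'.le
    _ = _ := by field_simp

lemma eventually_one_sub_mul_gagliardoSqR_lt (hu : ContDiff ℝ 1 u) (hcs : HasCompactSupport u)
    {c : ℝ} (hc : omegaN N / 2 * (∫ x, ‖fderiv ℝ u x‖ ^ 2) < c) :
    ∀ᶠ s in 𝓝[<] (1 : ℝ), (1 - s) * gagliardoSqR N s u < c := by
  have hlim : Tendsto (fun s : ℝ => omegaN N / 2 * (∫ x, ‖fderiv ℝ u x‖ ^ 2) +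
      (1 - s) * (2 * N * omegaN N / s * ∫ x, ‖u x‖ ^ 2)) (𝓝[<] 1)
      (𝓝 (omegaN N / 2 * ∫ x, ‖fderiv ℝ u x‖ ^ 2)) := by
    refine tendsto_nhdsWithin_of_tendsto_nhds ?_
    have hcont : ContinuousAt (fun s : ℝ => omegaN N / 2 * (∫ x, ‖fderiv ℝ u x‖ ^ 2) +
        (1 - s) * (2 * N * omegaN N / s * ∫ x, ‖u x‖ ^ 2)) 1 := by
      fun_prop (disch := norm_num)
    simpa using hcont.tendsto
  filter_upwards [hlim.eventually_lt_const hc, Ioo_mem_nhdsLT zero_lt_one] with s hlt hs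
  exact (one_sub_mul_gagliardoSqR_le hs.1 hs.2 hu hcs).trans_lt hlt

end Gagliardo

section SobolevConst

variable {N : ℕ} {q : ℝ} {Ω : Set (Eu N)}

/-- The competitors in the variational problems defining `sobolevConst` and `sobolevConst1`: the
test functions `u ∈ C_c^∞(Ω)` with `∫_Ω |u|^q = 1`. -/
structure IsNormalizedTestFunction (q : ℝ) (Ω : Set (Eu N)) (u : Eu N → ℝ) : Prop where
  contDiff : ContDiff ℝ (⊤ : ℕ∞) u
  hasCompactSupport : HasCompactSupport u
  tsupport_subset : tsupport u ⊆ Ω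
  setIntegral_rpow : ∫ x in Ω, |u x| ^ q = 1

namespace IsNormalizedTestFunction

variable {u : Eu N → ℝ}

lemma sobolevConst_le (s : ℝ) (hu : IsNormalizedTestFunction q Ω u) :
    sobolevConst N s q Ω ≤ gagliardoSqR N s u := by
  refine csInf_le ⟨0, ?_⟩ ⟨u, hu.1, hu.2, hu.3, hu.4, rfl⟩
  rintro c ⟨v, -, -, -, -, rfl⟩
  exact ENNReal.toReal_nonneg

lemma setIntegral_norm_fderiv_sq (hu : IsNormalizedTestFunction q Ω u) :
    ∫ x in Ω, ‖fderiv ℝ u x‖ ^ 2 = ∫ x, ‖fderiv ℝ u x‖ ^ 2 := by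
  refine setIntegral_eq_integral_of_forall_compl_eq_zero fun x hx => ?_
  have hx' : x ∉ tsupport (fderiv ℝ u) :=
    fun h => hx (hu.tsupport_subset (tsupport_fderiv_subset ℝ h))
  simp [image_eq_zero_of_notMem_tsupport hx']

end IsNormalizedTestFunction

lemma exists_isNormalizedTestFunction (hq : 0 < q) (hΩ : (interior Ω).Nonempty) :
    ∃ u, IsNormalizedTestFunction q Ω u := by
  obtain ⟨x₀, hx₀⟩ := hΩ
  obtain ⟨f, hfΩ, hfcs, hfd, -, hfx₀⟩ :=
    exists_contDiff_tsupport_subset (n := ⊤) (mem_interior_iff_mem_nhds.1 hx₀)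
  have hmass : 0 < ∫ x in Ω, |f x| ^ q := by
    have hcont : Continuous fun x => |f x| ^ q := hfd.continuous.abs.rpow_const fun _ => .inr hq.le
    rw [setIntegral_eq_integral_of_forall_compl_eq_zero fun x hx => by
      rw [image_eq_zero_of_notMem_tsupport fun h => hx (hfΩ h), abs_zero, Real.zero_rpow hq.ne']]
    exact hcont.integral_pos_of_hasCompactSupport_nonneg_nonzero (x := x₀)
      (hfcs.comp_left (g := fun y : ℝ => |y| ^ q) (by simp [hq.ne']))
      (fun x => by positivity) (by simp [hfx₀])
  set I := ∫ x in Ω, |f x| ^ q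
  refine ⟨fun x => I ^ (-q⁻¹) * f x, contDiff_const.mul hfd, hfcs.mul_left,
    tsupport_mul_subset_right.trans hfΩ, ?_⟩
  calc ∫ x in Ω, |I ^ (-q⁻¹) * f x| ^ q
      = ∫ x in Ω, I⁻¹ * |f x| ^ q := by
        refine integral_congr_ae (ae_of_all _ fun x => ?_)
        simp only
        rw [abs_mul, abs_of_pos (by positivity), Real.mul_rpow (by positivity) (abs_nonneg _),
          ← Real.rpow_mul hmass.le, neg_mul, inv_mul_cancel₀ hq.ne', Real.rpow_neg_one]
    _ = 1 := by rw [integral_const_mul, inv_mul_cancel₀ hmass.ne']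

lemma exists_integral_norm_fderiv_sq_lt (hq : 0 < q) (hΩ : (interior Ω).Nonempty) {c : ℝ}
    (hc : sobolevConst1 N q Ω < c) :
    ∃ u, IsNormalizedTestFunction q Ω u ∧ ∫ x, ‖fderiv ℝ u x‖ ^ 2 < c := by
  obtain ⟨v, hv⟩ := exists_isNormalizedTestFunction hq hΩ
  obtain ⟨_, ⟨u, hsmooth, hcs, hsub, hnorm, rfl⟩, hlt⟩ :=
    exists_lt_of_csInf_lt (by exact ⟨_, v, hv.1, hv.2, hv.3, hv.4, rfl⟩) hc
  have hu : IsNormalizedTestFunction q Ω u := ⟨hsmooth, hcs, hsub, hnorm⟩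
  exact ⟨u, hu, hu.setIntegral_norm_fderiv_sq ▸ hlt⟩

end SobolevConst

theorem limsup_sobolevConst_le_general {N : ℕ} [NeZero N] {q : ℝ} (hq : 0 < q)
    {Ω : Set (Eu N)} (hΩ : (interior Ω).Nonempty) :
    ∀ ε : ℝ, 0 < ε →
      ∀ᶠ s in 𝓝[<] (1 : ℝ),
        (1 - s) * sobolevConst N s q Ω ≤ omegaN N / 2 * sobolevConst1 N q Ω + ε := by
  intro ε hε
  have hω : 0 < omegaN N / 2 := half_pos (omegaN_pos N)
  obtain ⟨u, hu, hlt⟩ := exists_integral_norm_fderiv_sq_lt hq hΩ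
    (lt_add_of_pos_right (sobolevConst1 N q Ω) (div_pos hε hω))
  have henergy : omegaN N / 2 * (∫ x, ‖fderiv ℝ u x‖ ^ 2) <
      omegaN N / 2 * sobolevConst1 N q Ω + ε := by
    simpa only [mul_add, mul_div_cancel₀ ε hω.ne'] using mul_lt_mul_of_pos_left hlt hω
  filter_upwards [self_mem_nhdsWithin, eventually_one_sub_mul_gagliardoSqR_lt
    (hu.contDiff.of_le (by exact_mod_cast le_top)) hu.hasCompactSupport henergy] with s hs hsu
  calc (1 - s) * sobolevConst N s q Ω
      ≤ (1 - s) * gagliardoSqR N s u :=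
        mul_le_mul_of_nonneg_left (hu.sobolevConst_le s) (sub_nonneg.2 (le_of_lt hs))
    _ ≤ _ := hsu.le

/-- Estimate (A.1) of Lemma A.1: for every open bounded nonempty `Ω ⊆ ℝ^N`,
`limsup_{s↗1} (1-s) λ_{s,q}(Ω) ≤ (ω_N/2) λ_{1,q}(Ω)`, phrased as: for every `ε > 0`,
eventually along `s → 1⁻`, `(1-s) λ_{s,q}(Ω) ≤ (ω_N/2) λ_{1,q}(Ω) + ε`. -/
theorem limsup_sobolevConst_le
    (N : ℕ) (hN : 2 ≤ N) (q : ℝ) (hq1 : 1 ≤ q)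
    (hq2 : N = 2 ∨ q < 2 * N / ((N : ℝ) - 2))
    (Ω : Set (Eu N)) (hΩo : IsOpen Ω) (hΩb : Bornology.IsBounded Ω) (hΩne : Ω.Nonempty) :
    ∀ ε : ℝ, 0 < ε →
      ∀ᶠ s in 𝓝[<] (1 : ℝ),
        (1 - s) * sobolevConst N s q Ω ≤ omegaN N / 2 * sobolevConst1 N q Ω + ε := by
  have : NeZero N := ⟨by omega⟩
  exact limsup_sobolevConst_le_general (by linarith) (hΩo.interior_eq.symm ▸ hΩne)
end
end

section
/- (Equivalence of Gagliardo and directional seminorms.) Let N ≥ 1 and 0 < s < 1. There exists a constant C = C(N) > 1 such that for every u ∈ C_c^∞(ℝ^N), (1/C) · Σ_{i=1}^N [u]_{w_i^{s,2}} ≤ [u]_{W^{s,2}} ≤ C · Σ_{i=1}^N [u]_{w_i^{s,2}}, where [u]_{w_i^{s,2}} = ( ∫₀^∞ ∫_{ℝ^N} |u(x+ρ e_i) − u(x)|²/ρ^{1+2s} dx dρ )^{1/2} and e_i denotes the i-th standard basis vector of ℝ^N. -/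
/-!
Write `Φ h` for the squared `L²` norm of `u (· + h) - u` and `D v` for the integral of
`ρ ^ (-(1 + 2 s)) Φ (ρ v)` over `ρ > 0`, so that the `i`-th directional seminorm is the square root
of `D eᵢ`. By Fubini and scaling, `(N + 2 s) ∫_{|v| < 1} D v dv` is exactly the squared Gagliardo
seminorm. The triangle inequality and translation invariance give `D (v + w) ≤ 2 (D v + D w)`.
Averaging `D e ≤ 2 (D v + D (e - v))` over the ball of radius `1 / 2` about `e / 2`, which is
symmetric under `v ↦ e - v`, bounds the directional seminorms; expanding `v` in the standard basis
and integrating over the unit ball gives the converse bound.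
-/

open MeasureTheory Filter
open scoped ENNReal NNReal Topology FourierTransform RealInnerProductSpace

noncomputable section

/-- The directional seminorm
`[u]_{w_i^{s,2}} = (∫₀^∞ ∫_{ℝ^N} |u(x+ρ e_i) - u(x)|²/ρ^{1+2s} dx dρ)^{1/2}`. -/
def dirSemi (N : ℕ) (s : ℝ) (i : Fin N) (u : Eu N → ℝ) : ℝ :=
  Real.sqrt (∫⁻ ρ in Set.Ioi (0 : ℝ), ∫⁻ x, ENNReal.ofReal
    ((u (x + ρ • EuclideanSpace.single i (1 : ℝ)) - u x) ^ 2 / ρ ^ (1 + 2 * s))).toReal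

section Scaling

variable {E : Type*} [NormedAddCommGroup E] [NormedSpace ℝ E] [MeasurableSpace E] [BorelSpace E]
  [FiniteDimensional ℝ E] (μ : Measure E) [μ.IsAddHaarMeasure]

theorem setLIntegral_preimage_smul (f : E → ℝ≥0∞) (s : Set E) {c : ℝ} (hc : c ≠ 0) :
    ∫⁻ x in (c • ·) ⁻¹' s, f (c • x) ∂μ =
      ENNReal.ofReal |(c ^ Module.finrank ℝ E)⁻¹| * ∫⁻ x in s, f x ∂μ := by
  let e : E ≃ᵐ E := MeasurableEquiv.smul₀ c hc
  calc ∫⁻ x in (c • ·) ⁻¹' s, f (c • x) ∂μ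
      = ∫⁻ x, f x ∂(μ.restrict (e ⁻¹' s)).map e := (lintegral_map_equiv f e).symm
    _ = ∫⁻ x in s, f x ∂μ.map (c • ·) := by rw [← e.restrict_map]; rfl
    _ = ENNReal.ofReal |(c ^ Module.finrank ℝ E)⁻¹| * ∫⁻ x in s, f x ∂μ := by
        rw [Measure.map_addHaar_smul μ hc, Measure.restrict_smul, lintegral_smul_measure,
          smul_eq_mul]

theorem setLIntegral_ball_comp_smul (f : E → ℝ≥0∞) {c : ℝ} (hc : 0 < c) :
    ∫⁻ x in Metric.ball 0 1, f (c • x) ∂μ =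
      ENNReal.ofReal (c ^ (-(Module.finrank ℝ E : ℝ))) * ∫⁻ x in Metric.ball 0 c, f x ∂μ := by
  have hball : (c • ·) ⁻¹' Metric.ball (0 : E) c = Metric.ball 0 1 := by
    ext x
    simp [norm_smul, abs_of_pos hc, hc]
  rw [← hball, setLIntegral_preimage_smul μ f _ hc.ne', abs_of_pos (by positivity),
    Real.rpow_neg hc.le, Real.rpow_natCast]

theorem setLIntegral_Ioi_comp_mul_left (f : ℝ → ℝ≥0∞) {c : ℝ} (hc : 0 < c) :
    ∫⁻ ρ in Set.Ioi 0, f (c * ρ) = ENNReal.ofReal c⁻¹ * ∫⁻ ρ in Set.Ioi 0, f ρ := by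
  have hIoi : (c * ·) ⁻¹' Set.Ioi (0 : ℝ) = Set.Ioi 0 := by
    ext ρ
    simp [hc]
  simpa [hIoi, abs_of_pos hc] using setLIntegral_preimage_smul volume f (Set.Ioi 0) hc.ne'

end Scaling

section PowerWeights

theorem lintegral_Ioi_rpow {p c : ℝ} (hp : 0 < p) (hc : 0 < c) :
    ∫⁻ ρ in Set.Ioi c, ENNReal.ofReal (ρ ^ (-(1 + p))) = ENNReal.ofReal (c ^ (-p) / p) := by
  have hint := integrableOn_Ioi_rpow_of_lt (a := -(1 + p)) (by linarith) hc
  have hnonneg : 0 ≤ᵐ[volume.restrict (Set.Ioi c)] fun ρ : ℝ => ρ ^ (-(1 + p)) :=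
    (ae_restrict_mem measurableSet_Ioi).mono fun ρ hρ => Real.rpow_nonneg (hc.trans hρ).le _
  rw [← ofReal_integral_eq_lintegral_ofReal hint hnonneg,
    integral_Ioi_rpow_of_lt (by linarith) hc, show -(1 + p) + 1 = -p by ring, neg_div_neg_eq]

theorem lintegral_Ioc_rpow_lt_top {p c : ℝ} (hp : -1 < p) (hc : 0 ≤ c) :
    ∫⁻ ρ in Set.Ioc 0 c, ENNReal.ofReal (ρ ^ p) < ∞ :=
  ((intervalIntegrable_iff_integrableOn_Ioc_of_le hc).1
    (intervalIntegral.intervalIntegrable_rpow' hp)).lintegral_lt_top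

theorem lintegral_lintegral_ball_swap {E : Type*} [NormedAddCommGroup E] [MeasurableSpace E]
    [OpensMeasurableSpace E] (μ : Measure E) [SFinite μ] {k : ℝ → ℝ≥0∞} (hk : Measurable k)
    {Φ : E → ℝ≥0∞} (hΦ : Measurable Φ) :
    ∫⁻ ρ in Set.Ioi 0, ∫⁻ h in Metric.ball 0 ρ, k ρ * Φ h ∂μ =
      ∫⁻ h, (∫⁻ ρ in Set.Ioi ‖h‖, k ρ) * Φ h ∂μ := by
  let S : Set (ℝ × E) := {p | ‖p.2‖ < p.1}
  have hS : MeasurableSet S := measurableSet_lt measurable_snd.norm measurable_fst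
  let F : ℝ × E → ℝ≥0∞ := S.indicator fun p => k p.1 * Φ p.2
  have hF : Measurable F :=
    ((hk.comp measurable_fst).mul (hΦ.comp measurable_snd)).indicator hS
  have hball (ρ : ℝ) : ∫⁻ h in Metric.ball 0 ρ, k ρ * Φ h ∂μ = ∫⁻ h, F (ρ, h) ∂μ := by
    rw [← lintegral_indicator Metric.isOpen_ball.measurableSet]
    have hsection (h : E) : F (ρ, h) = (Metric.ball 0 ρ).indicator (fun h => k ρ * Φ h) h := by
      classical
      simp only [F, S, Set.indicator_apply, Set.mem_ofPred_eq, mem_ball_zero_iff]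
    simp only [hsection]
  have hIoi (h : E) :
      ∫⁻ ρ in Set.Ioi 0, F (ρ, h) = (∫⁻ ρ in Set.Ioi ‖h‖, k ρ) * Φ h := by
    have hsection (ρ : ℝ) :
        F (ρ, h) = (Set.Ioi ‖h‖).indicator (fun ρ => k ρ * Φ h) ρ := by
      simp only [F, S, Set.indicator_apply, Set.mem_ofPred_eq, Set.mem_Ioi]
    have hsub : Set.Ioi ‖h‖ ∩ Set.Ioi 0 = Set.Ioi ‖h‖ :=
      Set.inter_eq_left.2 (Set.Ioi_subset_Ioi (norm_nonneg h))
    simp only [hsection]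
    rw [lintegral_indicator measurableSet_Ioi, Measure.restrict_restrict measurableSet_Ioi, hsub,
      lintegral_mul_const _ hk]
  simp only [hball]
  rw [lintegral_lintegral_swap (f := fun ρ h => F (ρ, h)) hF.aemeasurable]
  exact lintegral_congr hIoi

end PowerWeights

/-- Even functions vanishing at the origin that are subadditive up to the factor `κ`. The `p`-th
power of an `L^p` norm of increments has this property, and integrating along rays keeps it. -/
structure QuasiSubadditive {E : Type*} [AddGroup E] (κ : ℝ≥0∞) (Φ : E → ℝ≥0∞) : Prop where
  map_zero : Φ 0 = 0
  map_neg (v : E) : Φ (-v) = Φ v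
  map_add_le (v w : E) : Φ (v + w) ≤ κ * (Φ v + Φ w)

theorem QuasiSubadditive.map_sum_le {E : Type*} [AddCommGroup E] {κ : ℝ≥0∞} {Φ : E → ℝ≥0∞}
    (hΦ : QuasiSubadditive κ Φ) (hκ : 1 ≤ κ) {ι : Type*} (t : Finset ι) (v : ι → E) :
    Φ (∑ i ∈ t, v i) ≤ κ ^ t.card * ∑ i ∈ t, Φ (v i) := by
  classical
  induction t using Finset.induction_on with
  | empty => simp [hΦ.map_zero]
  | insert a t ha ih =>
    rw [Finset.sum_insert ha, Finset.sum_insert ha, Finset.card_insert_of_notMem ha]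
    calc Φ (v a + ∑ i ∈ t, v i)
        ≤ κ * (Φ (v a) + κ ^ t.card * ∑ i ∈ t, Φ (v i)) := by
          grw [hΦ.map_add_le, ih]
      _ ≤ κ * (κ ^ t.card * Φ (v a) + κ ^ t.card * ∑ i ∈ t, Φ (v i)) := by
          gcongr
          exact le_mul_of_one_le_left' (one_le_pow₀ hκ)
      _ = κ ^ (t.card + 1) * (Φ (v a) + ∑ i ∈ t, Φ (v i)) := by ring

/-- The energy of order `α` of `Φ` along the ray through `v`. For `Φ` the squared `L²` norm of the
increments of `u` and `α = 2s`, it is the squared directional seminorm of `u` along `v`. -/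
def rayEnergy {E : Type*} [SMul ℝ E] (α : ℝ) (Φ : E → ℝ≥0∞) (v : E) : ℝ≥0∞ :=
  ∫⁻ ρ in Set.Ioi (0 : ℝ), ENNReal.ofReal (ρ ^ (-(1 + α))) * Φ (ρ • v)

/-- The integral of `Φ` against the singular kernel `‖h‖^{-(d + α)}`, `d` being the dimension. For
`Φ` the squared `L²` norm of the increments of `u` and `α = 2s`, it is the squared Gagliardo
seminorm of `u`. -/
def rieszEnergy {E : Type*} [NormedAddCommGroup E] [NormedSpace ℝ E] [MeasurableSpace E]
    (μ : Measure E) (α : ℝ) (Φ : E → ℝ≥0∞) : ℝ≥0∞ :=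
  ∫⁻ h, ENNReal.ofReal (‖h‖ ^ (-(Module.finrank ℝ E + α))) * Φ h ∂μ

section RayEnergy

variable {E : Type*} {α : ℝ} {κ : ℝ≥0∞} {Φ : E → ℝ≥0∞}

theorem rayEnergy_smul [AddCommGroup E] [Module ℝ E] {c : ℝ} (hc : 0 < c) (v : E) :
    rayEnergy α Φ (c • v) = ENNReal.ofReal (c ^ α) * rayEnergy α Φ v := by
  have hweight (ρ : ℝ) (hρ : ρ ∈ Set.Ioi 0) :
      ENNReal.ofReal (ρ ^ (-(1 + α))) * Φ (ρ • c • v) = ENNReal.ofReal (c ^ (1 + α)) *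
        (ENNReal.ofReal ((c * ρ) ^ (-(1 + α))) * Φ ((c * ρ) • v)) := by
    rw [Real.mul_rpow hc.le hρ.le, ← mul_assoc, ← ENNReal.ofReal_mul (by positivity),
      ← mul_assoc, ← Real.rpow_add hc, add_neg_cancel, Real.rpow_zero, one_mul, smul_smul,
      mul_comm c]
  rw [rayEnergy, setLIntegral_congr_fun measurableSet_Ioi hweight,
    lintegral_const_mul' _ _ ENNReal.ofReal_ne_top,
    setLIntegral_Ioi_comp_mul_left
      (fun ρ => ENNReal.ofReal (ρ ^ (-(1 + α))) * Φ (ρ • v)) hc,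
    ← mul_assoc, ← ENNReal.ofReal_mul (by positivity), ← Real.rpow_neg_one c,
    ← Real.rpow_add hc, add_neg_cancel_comm, rayEnergy]

theorem QuasiSubadditive.rayEnergy_zero [AddGroup E] [DistribSMul ℝ E]
    (hΦ : QuasiSubadditive κ Φ) : rayEnergy α Φ 0 = 0 := by
  simp [rayEnergy, hΦ.map_zero]

theorem QuasiSubadditive.rayEnergy_neg [AddGroup E] [DistribSMul ℝ E]
    (hΦ : QuasiSubadditive κ Φ) (v : E) : rayEnergy α Φ (-v) = rayEnergy α Φ v := by
  simp [rayEnergy, hΦ.map_neg]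

theorem QuasiSubadditive.rayEnergy_smul_le [AddCommGroup E] [Module ℝ E]
    (hΦ : QuasiSubadditive κ Φ) (hα : 0 ≤ α) {c : ℝ} (hc : |c| ≤ 1) (v : E) :
    rayEnergy α Φ (c • v) ≤ rayEnergy α Φ v := by
  have hpos {b : ℝ} (hb : 0 < b) (hb1 : b ≤ 1) : rayEnergy α Φ (b • v) ≤ rayEnergy α Φ v := by
    rw [rayEnergy_smul hb]
    exact mul_le_of_le_one_left' (ENNReal.ofReal_le_one.2 (Real.rpow_le_one hb.le hb1 hα))
  rcases lt_trichotomy c 0 with h | rfl | h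
  · rw [← hΦ.rayEnergy_neg, ← neg_smul]
    exact hpos (neg_pos.2 h) ((neg_le_abs c).trans hc)
  · simp [hΦ.rayEnergy_zero]
  · exact hpos h ((le_abs_self c).trans hc)

theorem rayEnergy_lt_top [NormedAddCommGroup E] [NormedSpace ℝ E] {M K : ℝ≥0∞} {β : ℝ}
    (hα : 0 < α) (hβ : α < β) (hM : M ≠ ∞) (hbdd : ∀ h, Φ h ≤ M) (hK : K ≠ ∞)
    (hpow : ∀ h, Φ h ≤ K * ‖h‖ₑ ^ β) (v : E) : rayEnergy α Φ v < ∞ := by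
  have hβ0 : 0 ≤ β := (hα.trans hβ).le
  have hKv : K * ‖v‖ₑ ^ β ≠ ∞ :=
    ENNReal.mul_ne_top hK (ENNReal.rpow_ne_top_of_nonneg hβ0 enorm_ne_top)
  have hnear : ∫⁻ ρ in Set.Ioc (0 : ℝ) 1, ENNReal.ofReal (ρ ^ (-(1 + α))) * Φ (ρ • v) < ∞ := by
    calc ∫⁻ ρ in Set.Ioc (0 : ℝ) 1, ENNReal.ofReal (ρ ^ (-(1 + α))) * Φ (ρ • v)
        ≤ ∫⁻ ρ in Set.Ioc (0 : ℝ) 1, ENNReal.ofReal (ρ ^ (-(1 + α) + β)) * (K * ‖v‖ₑ ^ β) := by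
          refine setLIntegral_mono' measurableSet_Ioc fun ρ hρ => ?_
          grw [hpow]
          rw [enorm_smul, Real.enorm_of_nonneg hρ.1.le, ENNReal.mul_rpow_of_nonneg _ _ hβ0,
            ENNReal.ofReal_rpow_of_pos hρ.1, Real.rpow_add hρ.1,
            ENNReal.ofReal_mul (Real.rpow_nonneg hρ.1.le _), mul_left_comm K, mul_assoc]
      _ < ∞ := by
          rw [lintegral_mul_const' _ _ hKv]
          exact ENNReal.mul_lt_top (lintegral_Ioc_rpow_lt_top (by linarith) zero_le_one)
            hKv.lt_top
  have hfar : ∫⁻ ρ in Set.Ioi (1 : ℝ), ENNReal.ofReal (ρ ^ (-(1 + α))) * Φ (ρ • v) < ∞ := by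
    calc ∫⁻ ρ in Set.Ioi (1 : ℝ), ENNReal.ofReal (ρ ^ (-(1 + α))) * Φ (ρ • v)
        ≤ ∫⁻ ρ in Set.Ioi (1 : ℝ), ENNReal.ofReal (ρ ^ (-(1 + α))) * M :=
          lintegral_mono fun ρ => by grw [hbdd]
      _ < ∞ := by
          rw [lintegral_mul_const' _ _ hM, lintegral_Ioi_rpow hα one_pos]
          exact ENNReal.mul_lt_top ENNReal.ofReal_lt_top hM.lt_top
  rw [rayEnergy, ← Set.Ioc_union_Ioi_eq_Ioi zero_le_one,
    lintegral_union measurableSet_Ioi (Set.Ioc_disjoint_Ioi le_rfl)]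
  exact ENNReal.add_lt_top.2 ⟨hnear, hfar⟩

variable [NormedAddCommGroup E] [NormedSpace ℝ E] [MeasurableSpace E] [BorelSpace E]

theorem measurable_rayEnergy_integrand (hΦ : Measurable Φ) (v : E) :
    Measurable fun ρ : ℝ => ENNReal.ofReal (ρ ^ (-(1 + α))) * Φ (ρ • v) := by
  fun_prop

theorem QuasiSubadditive.quasiSubadditive_rayEnergy (hΦ : QuasiSubadditive κ Φ)
    (hm : Measurable Φ) : QuasiSubadditive κ (rayEnergy α Φ) where
  map_zero := hΦ.rayEnergy_zero
  map_neg := hΦ.rayEnergy_neg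
  map_add_le v w := by
    have hv := measurable_rayEnergy_integrand (α := α) hm v
    have hw := measurable_rayEnergy_integrand (α := α) hm w
    rw [rayEnergy, rayEnergy, rayEnergy, ← lintegral_add_left hv,
      ← lintegral_const_mul _ (hv.fun_add hw)]
    refine lintegral_mono fun ρ => ?_
    rw [smul_add, ← mul_add, mul_left_comm]
    gcongr
    exact hΦ.map_add_le _ _

variable [SecondCountableTopology E]

theorem measurable_uncurry_rayEnergy_integrand (hΦ : Measurable Φ) :
    Measurable fun p : E × ℝ => ENNReal.ofReal (p.2 ^ (-(1 + α))) * Φ (p.2 • p.1) := by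
  fun_prop

theorem measurable_rayEnergy (hΦ : Measurable Φ) : Measurable (rayEnergy α Φ) :=
  (measurable_uncurry_rayEnergy_integrand hΦ).lintegral_prod_right'

end RayEnergy

section UnitBall

variable {E : Type*} [NormedAddCommGroup E] [NormedSpace ℝ E] [MeasurableSpace E] [BorelSpace E]
  [FiniteDimensional ℝ E] (μ : Measure E) [μ.IsAddHaarMeasure] {α : ℝ} {κ : ℝ≥0∞} {Φ : E → ℝ≥0∞}

theorem ofReal_mul_setLIntegral_ball_rayEnergy (hα : 0 < Module.finrank ℝ E + α)
    (hm : Measurable Φ) (hzero : Φ 0 = 0) :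
    ENNReal.ofReal (Module.finrank ℝ E + α) * ∫⁻ v in Metric.ball 0 1, rayEnergy α Φ v ∂μ =
      rieszEnergy μ α Φ := by
  set d : ℝ := (Module.finrank ℝ E : ℝ)
  have hscale (ρ : ℝ) (hρ : ρ ∈ Set.Ioi 0) :
      ∫⁻ v in Metric.ball 0 1, ENNReal.ofReal (ρ ^ (-(1 + α))) * Φ (ρ • v) ∂μ =
        ∫⁻ h in Metric.ball 0 ρ, ENNReal.ofReal (ρ ^ (-(1 + (d + α)))) * Φ h ∂μ := by
    rw [lintegral_const_mul' _ _ ENNReal.ofReal_ne_top, setLIntegral_ball_comp_smul μ Φ hρ,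
      lintegral_const_mul' _ _ ENNReal.ofReal_ne_top, ← mul_assoc,
      ← ENNReal.ofReal_mul (Real.rpow_nonneg hρ.le _), ← Real.rpow_add hρ,
      show -(1 + α) + -d = -(1 + (d + α)) by ring]
  have hball : ∫⁻ v in Metric.ball 0 1, rayEnergy α Φ v ∂μ =
      ∫⁻ h, (∫⁻ ρ in Set.Ioi ‖h‖, ENNReal.ofReal (ρ ^ (-(1 + (d + α))))) * Φ h ∂μ := by
    simp only [rayEnergy]
    rw [lintegral_lintegral_swap (measurable_uncurry_rayEnergy_integrand hm).aemeasurable,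
      setLIntegral_congr_fun measurableSet_Ioi hscale,
      lintegral_lintegral_ball_swap μ (by fun_prop) hm]
  rw [hball, ← lintegral_const_mul' _ _ ENNReal.ofReal_ne_top, rieszEnergy]
  refine lintegral_congr fun h => ?_
  rcases eq_or_ne h 0 with rfl | hh
  · simp [hzero]
  · rw [lintegral_Ioi_rpow hα (norm_pos_iff.2 hh), ← mul_assoc, ← ENNReal.ofReal_mul hα.le,
      mul_div_cancel₀ _ hα.ne']

theorem QuasiSubadditive.map_mul_measure_ball_le (hΦ : QuasiSubadditive κ Φ)
    (hm : Measurable Φ) {e : E} (he : ‖e‖ ≤ 1) :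
    Φ e * μ (Metric.ball 0 (1 / 2)) ≤ 2 * κ * ∫⁻ v in Metric.ball 0 1, Φ v ∂μ := by
  set c : E := (1 / 2 : ℝ) • e
  set B := Metric.ball c (1 / 2)
  have hc : ‖c‖ ≤ 1 / 2 := by
    rw [norm_smul, Real.norm_of_nonneg (by norm_num)]
    linarith
  have hsub : B ⊆ Metric.ball 0 1 :=
    Metric.ball_subset_ball' (by rw [dist_zero_right]; linarith)
  have hrefl : (e - ·) ⁻¹' B = B := by
    ext v
    have : e - v - c = -(v - c) := by simp only [c]; module
    simp only [B, Set.mem_preimage, mem_ball_iff_norm, this, norm_neg]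
  have hmrefl : MeasurePreserving (e - ·) (μ.restrict B) (μ.restrict B) := by
    simpa only [hrefl] using (μ.measurePreserving_sub_left e).restrict_preimage (s := B)
      Metric.isOpen_ball.measurableSet
  calc Φ e * μ (Metric.ball 0 (1 / 2))
      = ∫⁻ _ in B, Φ e ∂μ := by rw [setLIntegral_const, ← Measure.addHaar_ball_center μ c]
    _ ≤ ∫⁻ v in B, κ * (Φ v + Φ (e - v)) ∂μ := by
        refine lintegral_mono fun v => ?_
        simpa using hΦ.map_add_le v (e - v)
    _ = κ * (∫⁻ v in B, Φ v ∂μ + ∫⁻ v in B, Φ v ∂μ) := by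
        rw [lintegral_const_mul _ (by fun_prop), lintegral_add_left hm,
          hmrefl.lintegral_comp hm]
    _ = 2 * κ * ∫⁻ v in B, Φ v ∂μ := by ring
    _ ≤ 2 * κ * ∫⁻ v in Metric.ball 0 1, Φ v ∂μ := by gcongr

theorem QuasiSubadditive.ofReal_mul_rayEnergy_mul_measure_ball_le
    (hΦ : QuasiSubadditive κ Φ) (hm : Measurable Φ) (hα : 0 < Module.finrank ℝ E + α) {e : E}
    (he : ‖e‖ ≤ 1) :
    ENNReal.ofReal (Module.finrank ℝ E + α) * (rayEnergy α Φ e * μ (Metric.ball 0 (1 / 2))) ≤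
      2 * κ * rieszEnergy μ α Φ := by
  rw [← ofReal_mul_setLIntegral_ball_rayEnergy μ hα hm hΦ.map_zero, mul_left_comm (2 * κ)]
  exact mul_le_mul_right ((hΦ.quasiSubadditive_rayEnergy hm).map_mul_measure_ball_le μ
    (measurable_rayEnergy hm) he) _

end UnitBall

section Comparison

variable {E : Type*} [NormedAddCommGroup E] [InnerProductSpace ℝ E] [MeasurableSpace E]
  [BorelSpace E] {α : ℝ} {κ : ℝ≥0∞} {Φ : E → ℝ≥0∞} {ι : Type*} [Fintype ι]
  (b : OrthonormalBasis ι ℝ E)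

theorem QuasiSubadditive.rayEnergy_le_sum_basis (hΦ : QuasiSubadditive κ Φ) (hm : Measurable Φ)
    (hκ : 1 ≤ κ) (hα : 0 ≤ α) {v : E} (hv : ‖v‖ ≤ 1) :
    rayEnergy α Φ v ≤ κ ^ Fintype.card ι * ∑ i, rayEnergy α Φ (b i) := by
  have hcoord (i : ι) : |inner ℝ (b i) v| ≤ 1 :=
    (abs_real_inner_le_norm _ _).trans (by simpa using hv)
  calc rayEnergy α Φ v = rayEnergy α Φ (∑ i, inner ℝ (b i) v • b i) := by
        rw [b.sum_repr']
    _ ≤ κ ^ Fintype.card ι * ∑ i, rayEnergy α Φ (inner ℝ (b i) v • b i) :=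
        (hΦ.quasiSubadditive_rayEnergy hm).map_sum_le hκ _ _
    _ ≤ κ ^ Fintype.card ι * ∑ i, rayEnergy α Φ (b i) := by
        gcongr with i
        exact hΦ.rayEnergy_smul_le hα (hcoord i) _

theorem QuasiSubadditive.rieszEnergy_le_sum_basis (μ : Measure E) [μ.IsAddHaarMeasure]
    (hΦ : QuasiSubadditive κ Φ) (hm : Measurable Φ) (hκ : 1 ≤ κ) (hα : 0 ≤ α)
    (hd : 0 < Module.finrank ℝ E + α) :
    rieszEnergy μ α Φ ≤ ENNReal.ofReal (Module.finrank ℝ E + α) *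
      (κ ^ Fintype.card ι * (∑ i, rayEnergy α Φ (b i)) * μ (Metric.ball 0 1)) := by
  have : FiniteDimensional ℝ E := b.toBasis.finiteDimensional_of_finite
  rw [← ofReal_mul_setLIntegral_ball_rayEnergy μ hd hm hΦ.map_zero, ← setLIntegral_const]
  gcongr _ * ?_
  exact setLIntegral_mono' Metric.isOpen_ball.measurableSet fun v hv =>
    hΦ.rayEnergy_le_sum_basis b hm hκ hα (mem_ball_zero_iff.1 hv).le

theorem exists_rieszEnergy_comparable [Nonempty ι] (μ : Measure E) [μ.IsAddHaarMeasure]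
    (hκ : 1 ≤ κ) (hκ_top : κ ≠ ∞) (A : ℝ) :
    ∃ c : ℝ≥0, ∀ α, 0 ≤ α → α ≤ A → ∀ Φ : E → ℝ≥0∞, QuasiSubadditive κ Φ → Measurable Φ →
      (∀ i, rayEnergy α Φ (b i) ≤ c * rieszEnergy μ α Φ) ∧
      rieszEnergy μ α Φ ≤ c * ∑ i, rayEnergy α Φ (b i) := by
  have : FiniteDimensional ℝ E := b.toBasis.finiteDimensional_of_finite
  set d : ℝ := (Module.finrank ℝ E : ℝ) with hd
  have hd1 : 1 ≤ d := by
    rw [hd, Module.finrank_eq_card_basis b.toBasis]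
    exact_mod_cast Fintype.card_pos
  have hball0 : μ (Metric.ball 0 (1 / 2)) ≠ 0 := (Metric.measure_ball_pos μ _ (by norm_num)).ne'
  have hhalf : μ (Metric.ball 0 (1 / 2)) ≠ ∞ := measure_ball_lt_top.ne
  have hball : μ (Metric.ball 0 1) ≠ ∞ := measure_ball_lt_top.ne
  set lower := 2 * κ / μ (Metric.ball 0 (1 / 2))
  set upper := ENNReal.ofReal (d + A) * (κ ^ Fintype.card ι * μ (Metric.ball 0 1))
  have hfin : lower + upper ≠ ∞ :=
    ENNReal.add_ne_top.2 ⟨ENNReal.div_ne_top (by finiteness) hball0, by finiteness⟩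
  refine ⟨(lower + upper).toNNReal, fun α hα hαA Φ hΦ hm => ?_⟩
  rw [ENNReal.coe_toNNReal hfin]
  constructor
  · intro i
    have hone : 1 ≤ ENNReal.ofReal (d + α) := ENNReal.one_le_ofReal.2 (by linarith)
    calc rayEnergy α Φ (b i) ≤ lower * rieszEnergy μ α Φ := by
          rw [← ENNReal.mul_div_right_comm, ENNReal.le_div_iff_mul_le (.inl hball0) (.inl hhalf)]
          exact (le_mul_of_one_le_left' hone).trans (hΦ.ofReal_mul_rayEnergy_mul_measure_ball_le
            μ hm (by linarith) (b.norm_eq_one i).le)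
      _ ≤ (lower + upper) * rieszEnergy μ α Φ := by gcongr; exact le_self_add
  · calc rieszEnergy μ α Φ
        ≤ ENNReal.ofReal (d + α) *
            (κ ^ Fintype.card ι * (∑ i, rayEnergy α Φ (b i)) * μ (Metric.ball 0 1)) :=
          hΦ.rieszEnergy_le_sum_basis b μ hm hκ hα (by linarith)
      _ ≤ ENNReal.ofReal (d + A) *
            (κ ^ Fintype.card ι * (∑ i, rayEnergy α Φ (b i)) * μ (Metric.ball 0 1)) := by gcongr
      _ = upper * ∑ i, rayEnergy α Φ (b i) := by simp only [upper]; ring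
      _ ≤ (lower + upper) * ∑ i, rayEnergy α Φ (b i) := by gcongr; exact le_add_self

end Comparison

/-- The `p`-th power of the `L^p` norm of the increment `x ↦ u (x + h) - u x`. -/
def incrementEnergy {E F : Type*} [Add E] [MeasurableSpace E] [NormedAddCommGroup F]
    (μ : Measure E) (p : ℝ) (u : E → F) (h : E) : ℝ≥0∞ :=
  ∫⁻ x, ‖u (x + h) - u x‖ₑ ^ p ∂μ

section Increments

variable {E F : Type*} [MeasurableSpace E] [NormedAddCommGroup F] {μ : Measure E} {p : ℝ}
  {u : E → F}

theorem measurable_uncurry_enorm_sub_rpow [Add E] [MeasurableAdd₂ E] (hu : StronglyMeasurable u) :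
    Measurable fun q : E × E => ‖u (q.2 + q.1) - u q.2‖ₑ ^ p :=
  ((hu.comp_measurable (measurable_snd.add measurable_fst)).sub
    (hu.comp_measurable measurable_snd)).enorm.pow_const p

theorem measurable_incrementEnergy [Add E] [MeasurableAdd₂ E] [SFinite μ]
    (hu : StronglyMeasurable u) : Measurable (incrementEnergy μ p u) :=
  (measurable_uncurry_enorm_sub_rpow hu).lintegral_prod_right'

variable [AddGroup E] [MeasurableAdd₂ E] [μ.IsAddRightInvariant]

theorem incrementEnergy_neg (h : E) : incrementEnergy μ p u (-h) = incrementEnergy μ p u h := by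
  simp only [incrementEnergy]
  rw [← lintegral_add_right_eq_self _ h]
  refine lintegral_congr fun x => ?_
  rw [add_neg_cancel_right, enorm_sub_rev]

theorem incrementEnergy_add_le (hu : StronglyMeasurable u) (hp : 1 ≤ p) (v w : E) :
    incrementEnergy μ p u (v + w) ≤
      2 ^ (p - 1) * (incrementEnergy μ p u v + incrementEnergy μ p u w) := by
  have hmeas : Measurable fun x => ‖u (x + v) - u x‖ₑ ^ p :=
    (measurable_uncurry_enorm_sub_rpow hu).comp measurable_prodMk_left
  have hshift : incrementEnergy μ p u w = ∫⁻ x, ‖u (x + v + w) - u (x + v)‖ₑ ^ p ∂μ :=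
    (lintegral_add_right_eq_self (fun x => ‖u (x + w) - u x‖ₑ ^ p) v).symm
  have hconst : (2 : ℝ≥0∞) ^ (p - 1) ≠ ∞ :=
    ENNReal.rpow_ne_top_of_nonneg (by linarith) ENNReal.ofNat_ne_top
  rw [hshift, incrementEnergy, incrementEnergy, ← lintegral_add_left hmeas,
    ← lintegral_const_mul' _ _ hconst]
  refine lintegral_mono fun x => ?_
  calc ‖u (x + (v + w)) - u x‖ₑ ^ p
      ≤ (‖u (x + v) - u x‖ₑ + ‖u (x + v + w) - u (x + v)‖ₑ) ^ p := by
        gcongr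
        rw [← add_assoc, ← sub_add_sub_cancel' (u (x + v))]
        exact enorm_add_le _ _
    _ ≤ _ := ENNReal.rpow_add_le_mul_rpow_add_rpow _ _ hp

theorem quasiSubadditive_incrementEnergy (hu : StronglyMeasurable u) (hp : 1 ≤ p) :
    QuasiSubadditive (2 ^ (p - 1)) (incrementEnergy μ p u) where
  map_zero := by simp [incrementEnergy, zero_lt_one.trans_le hp]
  map_neg := incrementEnergy_neg
  map_add_le := incrementEnergy_add_le hu hp

theorem incrementEnergy_le_of_enorm_sub_le (hu : StronglyMeasurable u) (hp : 0 < p) {c : ℝ≥0∞}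
    {h : E} (hc : ∀ x, ‖u (x + h) - u x‖ₑ ≤ c) :
    incrementEnergy μ p u h ≤ c ^ p * (2 * μ (Function.support u)) := by
  have hsupp : MeasurableSet (Function.support u) := hu.measurableSet_support
  have hone : Measurable ((Function.support u).indicator (1 : E → ℝ≥0∞)) :=
    measurable_one.indicator hsupp
  calc incrementEnergy μ p u h
      ≤ ∫⁻ x, c ^ p *
          ((Function.support u).indicator 1 x + (Function.support u).indicator 1 (x + h)) ∂μ := by
        refine lintegral_mono fun x => ?_
        by_cases hx : u x = 0 ∧ u (x + h) = 0
        · simp [hx.1, hx.2, hp]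
        · refine (ENNReal.rpow_le_rpow (hc x) hp.le).trans (le_mul_of_one_le_right' ?_)
          rcases not_and_or.1 hx with hx | hx <;> simp [hx]
    _ = c ^ p * (2 * μ (Function.support u)) := by
        rw [lintegral_const_mul _ (by fun_prop), lintegral_add_left hone,
          lintegral_add_right_eq_self (fun x => (Function.support u).indicator 1 x),
          lintegral_indicator_one hsupp, two_mul]

end Increments

theorem rayEnergy_incrementEnergy_lt_top {E F : Type*} [NormedAddCommGroup E] [NormedSpace ℝ E]
    [MeasurableSpace E] [BorelSpace E] [SecondCountableTopology E] [NormedAddCommGroup F]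
    {μ : Measure E} [μ.IsAddRightInvariant] [IsFiniteMeasureOnCompacts μ] {α p : ℝ} {u : E → F}
    {L : ℝ≥0} (hα : 0 < α) (hp : α < p) (hL : LipschitzWith L u) (hc : HasCompactSupport u)
    (v : E) : rayEnergy α (incrementEnergy μ p u) v < ∞ := by
  obtain ⟨M, hM⟩ := hc.exists_bound_of_continuous hL.continuous
  have hu : StronglyMeasurable u := hL.continuous.stronglyMeasurable_of_hasCompactSupport hc
  have hp0 : 0 < p := hα.trans hp
  have hV : 2 * μ (Function.support u) ≠ ∞ :=
    ENNReal.mul_ne_top ENNReal.ofNat_ne_top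
      ((measure_mono (subset_tsupport u)).trans_lt hc.isCompact.measure_lt_top).ne
  have hbdd (h : E) : incrementEnergy μ p u h ≤
      (ENNReal.ofReal M + ENNReal.ofReal M) ^ p * (2 * μ (Function.support u)) := by
    refine incrementEnergy_le_of_enorm_sub_le hu hp0 fun x => ?_
    grw [enorm_sub_le, ← ofReal_norm, ← ofReal_norm, hM, hM]
  have hpow (h : E) : incrementEnergy μ p u h ≤
      (L : ℝ≥0∞) ^ p * (2 * μ (Function.support u)) * ‖h‖ₑ ^ p := by
    rw [mul_right_comm, ← ENNReal.mul_rpow_of_nonneg _ _ hp0.le]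
    refine incrementEnergy_le_of_enorm_sub_le hu hp0 fun x => ?_
    simpa [edist_eq_enorm_sub] using hL.edist_le_mul (x + h) x
  exact rayEnergy_lt_top hα hp (by finiteness) hbdd (by finiteness) hpow v

section SquareRoots

variable {ι : Type*} [Fintype ι] {c : ℝ≥0} {G : ℝ≥0∞} {D : ι → ℝ≥0∞}

theorem sqrt_sum_le_sum_sqrt {f : ι → ℝ} (hf : ∀ i, 0 ≤ f i) : √(∑ i, f i) ≤ ∑ i, √(f i) := by
  refine Real.sqrt_le_iff.2 ⟨Finset.sum_nonneg fun i _ => Real.sqrt_nonneg _, ?_⟩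
  calc ∑ i, f i = ∑ i, √(f i) ^ 2 :=
        Finset.sum_congr rfl fun i _ => (Real.sq_sqrt (hf i)).symm
    _ ≤ (∑ i, √(f i)) ^ 2 := Finset.sum_sq_le_sq_sum_of_nonneg fun i _ => Real.sqrt_nonneg _

theorem sqrt_toReal_le_mul_sum_sqrt_toReal (hD : ∀ i, D i ≠ ∞) (h : G ≤ c * ∑ i, D i) :
    √G.toReal ≤ √c * ∑ i, √(D i).toReal := by
  have hfin : c * ∑ i, D i ≠ ∞ :=
    ENNReal.mul_ne_top ENNReal.coe_ne_top (ENNReal.sum_ne_top.2 fun i _ => hD i)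
  calc √G.toReal ≤ √(c * ∑ i, D i).toReal := Real.sqrt_le_sqrt (ENNReal.toReal_mono hfin h)
    _ = √c * √(∑ i, (D i).toReal) := by
        rw [ENNReal.toReal_mul, ENNReal.coe_toReal, Real.sqrt_mul c.coe_nonneg,
          ENNReal.toReal_sum fun i _ => hD i]
    _ ≤ √c * ∑ i, √(D i).toReal := by
        gcongr
        exact sqrt_sum_le_sum_sqrt fun i => ENNReal.toReal_nonneg

theorem sum_sqrt_toReal_le_card_mul_sqrt_toReal (hG : G ≠ ∞) (h : ∀ i, D i ≤ c * G) :
    ∑ i, √(D i).toReal ≤ Fintype.card ι * √c * √G.toReal := by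
  have hterm (i : ι) : √(D i).toReal ≤ √c * √G.toReal := by
    rw [← Real.sqrt_mul c.coe_nonneg, ← ENNReal.coe_toReal, ← ENNReal.toReal_mul]
    exact Real.sqrt_le_sqrt
      (ENNReal.toReal_mono (ENNReal.mul_ne_top ENNReal.coe_ne_top hG) (h i))
  simpa [mul_assoc] using Finset.sum_le_card_nsmul Finset.univ _ _ fun i _ => hterm i

end SquareRoots

section Seminorms

variable {N : ℕ} {s : ℝ} {u : Eu N → ℝ}

theorem ofReal_sq_eq_enorm_rpow (a : ℝ) : ENNReal.ofReal (a ^ 2) = ‖a‖ₑ ^ (2 : ℝ) := by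
  rw [ENNReal.rpow_two, Real.enorm_eq_ofReal_abs, ← ENNReal.ofReal_pow (abs_nonneg a), sq_abs]

theorem dirSemi_eq_sqrt_rayEnergy (s : ℝ) (i : Fin N) (u : Eu N → ℝ) :
    dirSemi N s i u = √(rayEnergy (2 * s) (incrementEnergy volume 2 u)
      (EuclideanSpace.basisFun (Fin N) ℝ i)).toReal := by
  rw [dirSemi, rayEnergy, EuclideanSpace.basisFun_apply]
  congr 2
  refine setLIntegral_congr_fun measurableSet_Ioi fun ρ (hρ : 0 < ρ) => ?_
  rw [incrementEnergy, ← lintegral_const_mul' _ _ ENNReal.ofReal_ne_top]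
  refine lintegral_congr fun x => ?_
  rw [← ofReal_sq_eq_enorm_rpow, ← ENNReal.ofReal_mul (by positivity), Real.rpow_neg hρ.le,
    div_eq_inv_mul]

theorem gagliardoSq_eq_rieszEnergy (hu : Measurable u) :
    gagliardoSq N s u = rieszEnergy volume (2 * s) (incrementEnergy volume 2 u) := by
  have hshift (x : Eu N) :
      ∫⁻ y, ENNReal.ofReal (|u x - u y| ^ 2 / ‖x - y‖ ^ ((N : ℝ) + 2 * s)) =
        ∫⁻ h, ENNReal.ofReal (‖h‖ ^ (-((N : ℝ) + 2 * s))) * ‖u (x + h) - u x‖ₑ ^ (2 : ℝ) := by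
    rw [← lintegral_add_left_eq_self _ x]
    refine lintegral_congr fun h => ?_
    rw [← ofReal_sq_eq_enorm_rpow, ← ENNReal.ofReal_mul (by positivity), sq_abs,
      sub_add_cancel_left, norm_neg, Real.rpow_neg (norm_nonneg h), ← neg_sub, neg_sq,
      div_eq_inv_mul]
  have hmeas : Measurable fun q : Eu N × Eu N =>
      ENNReal.ofReal (‖q.2‖ ^ (-((N : ℝ) + 2 * s))) * ‖u (q.1 + q.2) - u q.1‖ₑ ^ (2 : ℝ) := by
    fun_prop
  simp only [gagliardoSq, hshift, rieszEnergy, finrank_euclideanSpace_fin, incrementEnergy]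
  rw [lintegral_lintegral_swap hmeas.aemeasurable]
  exact lintegral_congr fun h => lintegral_const_mul' _ _ ENNReal.ofReal_ne_top

theorem quasiSubadditive_incrementEnergy_two (hu : Measurable u) :
    QuasiSubadditive 2 (incrementEnergy volume 2 u) := by
  have h := quasiSubadditive_incrementEnergy (μ := volume) hu.stronglyMeasurable one_le_two
  rwa [show (2 : ℝ) - 1 = 1 by norm_num, ENNReal.rpow_one] at h

theorem gagliardoSq_lt_top {L : ℝ≥0} (hs : 0 < s) (hs1 : s < 1) (hL : LipschitzWith L u)
    (hc : HasCompactSupport u) : gagliardoSq N s u < ∞ := by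
  have hu : Measurable u := hL.continuous.measurable
  have hray (v : Eu N) : rayEnergy (2 * s) (incrementEnergy volume 2 u) v ≠ ∞ :=
    (rayEnergy_incrementEnergy_lt_top (by linarith) (by linarith) hL hc v).ne
  have hsum : ∑ i, rayEnergy (2 * s) (incrementEnergy volume 2 u)
      (EuclideanSpace.basisFun (Fin N) ℝ i) ≠ ∞ := ENNReal.sum_ne_top.2 fun i _ => hray _
  rw [gagliardoSq_eq_rieszEnergy hu]
  refine ((quasiSubadditive_incrementEnergy_two hu).rieszEnergy_le_sum_basis
    (EuclideanSpace.basisFun (Fin N) ℝ) volume (measurable_incrementEnergy hu.stronglyMeasurable)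
    one_le_two (by positivity) (by positivity)).trans_lt ?_
  have hball : volume (Metric.ball (0 : Eu N) 1) ≠ ∞ := measure_ball_lt_top.ne
  finiteness

theorem exists_gagliardoSq_comparable (hN : 1 ≤ N) :
    ∃ c : ℝ≥0, ∀ s : ℝ, 0 ≤ s → s ≤ 1 → ∀ u : Eu N → ℝ, Measurable u →
      (∀ i, rayEnergy (2 * s) (incrementEnergy volume 2 u)
        (EuclideanSpace.basisFun (Fin N) ℝ i) ≤ c * gagliardoSq N s u) ∧
      gagliardoSq N s u ≤ c * ∑ i, rayEnergy (2 * s) (incrementEnergy volume 2 u)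
        (EuclideanSpace.basisFun (Fin N) ℝ i) := by
  have : Nonempty (Fin N) := ⟨⟨0, hN⟩⟩
  obtain ⟨c, hc⟩ := exists_rieszEnergy_comparable (EuclideanSpace.basisFun (Fin N) ℝ) volume
    one_le_two ENNReal.ofNat_ne_top 2
  refine ⟨c, fun s hs hs1 u hu => ?_⟩
  rw [gagliardoSq_eq_rieszEnergy hu]
  exact hc (2 * s) (by positivity) (by linarith) _ (quasiSubadditive_incrementEnergy_two hu)
    (measurable_incrementEnergy hu.stronglyMeasurable)

end Seminorms

theorem gagliardo_equiv_directional_seminorms_general (N : ℕ) (hN : 1 ≤ N) :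
    ∃ C : ℝ, 1 < C ∧
      ∀ s : ℝ, 0 ≤ s → s ≤ 1 →
      ∀ u : Eu N → ℝ, Measurable u → gagliardoSq N s u ≠ ∞ →
        1 / C * ∑ i : Fin N, dirSemi N s i u ≤ Real.sqrt (gagliardoSqR N s u) ∧
        Real.sqrt (gagliardoSqR N s u) ≤ C * ∑ i : Fin N, dirSemi N s i u := by
  obtain ⟨c, hc⟩ := exists_gagliardoSq_comparable hN
  have hc0 : 0 ≤ √(c : ℝ) := Real.sqrt_nonneg _
  have hNc : 0 ≤ N * √(c : ℝ) := by positivity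
  refine ⟨2 + N * √c + √c, by linarith, fun s hs hs1 u hu hG => ?_⟩
  obtain ⟨hlower, hupper⟩ := hc s hs hs1 u hu
  have hray i := ne_top_of_le_ne_top (ENNReal.mul_ne_top ENNReal.coe_ne_top hG) (hlower i)
  simp only [dirSemi_eq_sqrt_rayEnergy, gagliardoSqR]
  rw [one_div, inv_mul_le_iff₀ (by positivity)]
  constructor
  · grw [sum_sqrt_toReal_le_card_mul_sqrt_toReal hG hlower, Fintype.card_fin]
    gcongr
    linarith
  · grw [sqrt_toReal_le_mul_sum_sqrt_toReal hray hupper]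
    gcongr
    linarith

/-- **Proposition B.1**: equivalence of the Gagliardo seminorm and the sum of the
directional seminorms, with a constant `C = C(N) > 1` independent of `s`. -/
theorem gagliardo_equiv_directional_seminorms (N : ℕ) (hN : 1 ≤ N) :
    ∃ C : ℝ, 1 < C ∧
      ∀ s : ℝ, 0 < s → s < 1 →
      ∀ u : Eu N → ℝ, ContDiff ℝ (⊤ : ℕ∞) u → HasCompactSupport u →
        1 / C * ∑ i : Fin N, dirSemi N s i u ≤ Real.sqrt (gagliardoSqR N s u) ∧
        Real.sqrt (gagliardoSqR N s u) ≤ C * ∑ i : Fin N, dirSemi N s i u := by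
  obtain ⟨C, hC, hequiv⟩ := gagliardo_equiv_directional_seminorms_general N hN
  refine ⟨C, hC, fun s hs hs1 u hu hc => ?_⟩
  obtain ⟨L, hL⟩ := hu.lipschitzWith_of_hasCompactSupport hc (by simp)
  exact hequiv s hs.le hs1.le u hL.continuous.measurable (gagliardoSq_lt_top hs hs1 hL hc).ne
end
end
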